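/- For every B > 0 and every p ∈ S there exists L < ∞ such that for every k ≥ 1, every discrete order parameter (m,q) with at most k atoms, and every β ∈ ℝ^S with |β_r| ≤ B for all r ∈ S, the map β_p ↦ P(m,q;β) (with the other coordinates of β fixed) is twice differentiable and its second derivative is bounded in absolute value by L. -/

import Mathlib

open MeasureTheory ProbabilityTheory Real Filter Topology

noncomputable section

/-- The centered Gaussian measure on `ℝ` with variance `v` (Dirac at `0` if `v ≤ 0`). -/
def gauss (v : ℝ) : Measure ℝ := gaussianReal 0 v.toNNReal

/-- `ξ(x) = Σ_{p ∈ S} β_p^2 x^p`. -/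
def xiFn (S : Finset ℕ) (β : ℕ → ℝ) (x : ℝ) : ℝ := ∑ p ∈ S, β p ^ 2 * x ^ p

/-- `ξ'(x) = Σ_{p ∈ S} β_p^2 p x^(p-1)`. -/
def xiFn' (S : Finset ℕ) (β : ℕ → ℝ) (x : ℝ) : ℝ := ∑ p ∈ S, β p ^ 2 * p * x ^ (p - 1)

/-- `θ(x) = x ξ'(x) - ξ(x)`. -/
def thetaFn (S : Finset ℕ) (β : ℕ → ℝ) (x : ℝ) : ℝ := x * xiFn' S β x - xiFn S β x

/-- A discrete order parameter with at most `k` atoms: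
`0 = m_0 ≤ m_1 ≤ ⋯ ≤ m_k = 1` with `m_l > 0` for `1 ≤ l ≤ k`,
and `0 = q_0 ≤ q_1 ≤ ⋯ ≤ q_k ≤ q_{k+1} = 1`. -/
structure OrderParam (k : ℕ) where
  m : ℕ → ℝ
  q : ℕ → ℝ
  m_zero : m 0 = 0
  m_last : m k = 1
  m_mono : ∀ l, l < k → m l ≤ m (l + 1)
  m_pos : ∀ l, 1 ≤ l → l ≤ k → 0 < m l
  q_zero : q 0 = 0
  q_last : q (k + 1) = 1
  q_mono : ∀ l, l ≤ k → q l ≤ q (l + 1)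

/-- The recursively defined functions of the Parisi functional:
`parisiB m v k j = A_{k-j}`, so `parisiB m v k 0 = A_k = log cosh` and
`parisiB m v k k = A_0`, where
`A_{l-1}(x) = (1/m_l) log ∫ exp (m_l A_l (x+y)) dγ_{v_l}(y)`. -/
def parisiB (m v : ℕ → ℝ) (k : ℕ) : ℕ → ℝ → ℝ
  | 0, x => Real.log (Real.cosh x)
  | j + 1, x =>
      (1 / m (k - j)) *
        Real.log (∫ y, Real.exp (m (k - j) * parisiB m v k j (x + y)) ∂(gauss (v (k - j))))

/-- The variances `v_0 = ξ'(q_1)` and `v_l = ξ'(q_{l+1}) - ξ'(q_l)` for `l ≥ 1`. -/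
def opVar (S : Finset ℕ) (β : ℕ → ℝ) {k : ℕ} (op : OrderParam k) : ℕ → ℝ := fun l =>
  if l = 0 then xiFn' S β (op.q 1) else xiFn' S β (op.q (l + 1)) - xiFn' S β (op.q l)

/-- The discrete Parisi functional
`P(m,q;β) = ∫ A_0(h+y) dγ_{v_0}(y) - (1/2) Σ_{1≤l≤k} m_l (θ(q_{l+1}) - θ(q_l))`. -/
def parisiP (S : Finset ℕ) (h : ℝ) (β : ℕ → ℝ) {k : ℕ} (op : OrderParam k) : ℝ :=
  (∫ y, parisiB op.m (opVar S β op) k k (h + y) ∂(gauss (opVar S β op 0))) -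
    (1 / 2) * ∑ l ∈ Finset.Icc 1 k, op.m l * (thetaFn S β (op.q (l + 1)) - thetaFn S β (op.q l))

/-- The Parisi formula: infimum over `k ≥ 1` and discrete order parameters with at
most `k` atoms. -/
def parisiF (S : Finset ℕ) (h : ℝ) (β : ℕ → ℝ) : ℝ :=
  sInf {x : ℝ | ∃ k : ℕ, 1 ≤ k ∧ ∃ op : OrderParam k, x = parisiP S h β op}

namespace PS

/-- Functions of a parameter `t` and a space variable `x`. -/
abbrev Fn := ℝ → ℝ → ℝ

def dx (g : Fn) : Fn := fun t x => deriv (fun y => g t y) x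
def dt (g : Fn) : Fn := fun t x => deriv (fun s => g s x) t

/-- Exponential growth in `x`, locally uniformly in `t`. -/
def Growth (g : Fn) : Prop :=
  ∀ T : ℝ, ∃ C K : ℝ, 0 ≤ C ∧ 0 ≤ K ∧ ∀ t x, |t| ≤ T → |g t x| ≤ C * exp (K * |x|)

def Base (g : Fn) : Prop := Continuous (fun z : ℝ × ℝ => g z.1 z.2) ∧ Growth g

def NiceN : ℕ → Fn → Prop
  | 0, g => Base g
  | n + 1, g => Base g ∧ (∀ t x, DifferentiableAt ℝ (fun y => g t y) x) ∧
      (∀ t x, DifferentiableAt ℝ (fun s => g s x) t) ∧ NiceN n (dx g) ∧ NiceN n (dt g)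

def Nice (g : Fn) : Prop := ∀ n, NiceN n g

theorem NiceN.base {n : ℕ} {g : Fn} (h : NiceN n g) : Base g := by
  cases n with
  | zero => exact h
  | succ n => exact h.1

theorem NiceN.mono {n : ℕ} : ∀ {g : Fn}, NiceN (n + 1) g → NiceN n g := by
  induction n with
  | zero => intro g h; exact h.1
  | succ n ih => intro g h; exact ⟨h.1, h.2.1, h.2.2.1, ih h.2.2.2.1, ih h.2.2.2.2⟩

theorem dx_eq {g gx : Fn} (h : ∀ t x, HasDerivAt (fun y => g t y) (gx t x) x) : dx g = gx := by
  funext t x; exact (h t x).deriv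

theorem dt_eq {g gt : Fn} (h : ∀ t x, HasDerivAt (fun s => g s x) (gt t x) t) : dt g = gt := by
  funext t x; exact (h t x).deriv

theorem NiceN.mk' {n : ℕ} {g gx gt : Fn} (hb : Base g)
    (h1 : ∀ t x, HasDerivAt (fun y => g t y) (gx t x) x)
    (h2 : ∀ t x, HasDerivAt (fun s => g s x) (gt t x) t)
    (hx : NiceN n gx) (ht : NiceN n gt) : NiceN (n + 1) g := by
  refine ⟨hb, fun t x => (h1 t x).differentiableAt, fun t x => (h2 t x).differentiableAt, ?_, ?_⟩
  · rw [dx_eq h1]; exact hx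
  · rw [dt_eq h2]; exact ht

theorem NiceN.hdx {n : ℕ} {g : Fn} (h : NiceN (n + 1) g) (t x : ℝ) :
    HasDerivAt (fun y => g t y) (dx g t x) x := (h.2.1 t x).hasDerivAt

theorem NiceN.hdt {n : ℕ} {g : Fn} (h : NiceN (n + 1) g) (t x : ℝ) :
    HasDerivAt (fun s => g s x) (dt g t x) t := (h.2.2.1 t x).hasDerivAt

theorem Nice.base {g : Fn} (h : Nice g) : Base g := h 0
theorem Nice.dx {g : Fn} (h : Nice g) : Nice (dx g) := fun n => (h (n + 1)).2.2.2.1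
theorem Nice.dt {g : Fn} (h : Nice g) : Nice (dt g) := fun n => (h (n + 1)).2.2.2.2
theorem Nice.hdx {g : Fn} (h : Nice g) (t x : ℝ) :
    HasDerivAt (fun y => g t y) (PS.dx g t x) x := (h 1).hdx t x
theorem Nice.hdt {g : Fn} (h : Nice g) (t x : ℝ) :
    HasDerivAt (fun s => g s x) (PS.dt g t x) t := (h 1).hdt t x

theorem Base.contx {g : Fn} (h : Base g) (t : ℝ) : Continuous (g t) :=
  h.1.comp (by fun_prop : Continuous fun x : ℝ => ((t, x) : ℝ × ℝ))

theorem Growth.add {f g : Fn} (hf : Growth f) (hg : Growth g) : Growth (f + g) := by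
  intro T
  obtain ⟨C, K, hC, hK, h⟩ := hf T
  obtain ⟨C', K', hC', hK', h'⟩ := hg T
  refine ⟨C + C', K + K', by positivity, by positivity, fun t x ht => ?_⟩
  have e1 : exp (K * |x|) ≤ exp ((K + K') * |x|) := by gcongr; linarith
  have e2 : exp (K' * |x|) ≤ exp ((K + K') * |x|) := by gcongr; linarith
  calc |f t x + g t x| ≤ |f t x| + |g t x| := abs_add_le _ _
    _ ≤ C * exp (K * |x|) + C' * exp (K' * |x|) := add_le_add (h t x ht) (h' t x ht)
    _ ≤ C * exp ((K + K') * |x|) + C' * exp ((K + K') * |x|) := by gcongr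
    _ = _ := by ring

theorem Growth.mul {f g : Fn} (hf : Growth f) (hg : Growth g) : Growth (f * g) := by
  intro T
  obtain ⟨C, K, hC, hK, h⟩ := hf T
  obtain ⟨C', K', hC', hK', h'⟩ := hg T
  refine ⟨C * C', K + K', by positivity, by positivity, fun t x ht => ?_⟩
  calc |f t x * g t x| = |f t x| * |g t x| := abs_mul _ _
    _ ≤ (C * exp (K * |x|)) * (C' * exp (K' * |x|)) :=
        mul_le_mul (h t x ht) (h' t x ht) (abs_nonneg _) (by positivity)
    _ = _ := by rw [add_mul, Real.exp_add]; ring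

theorem Growth.of_bdd {f : Fn} (C : ℝ) (h : ∀ t x, |f t x| ≤ C) : Growth f := by
  intro T
  refine ⟨C, 0, (abs_nonneg _).trans (h 0 0), le_rfl, fun t x _ => by simpa using h t x⟩

theorem Base.add {f g : Fn} (hf : Base f) (hg : Base g) : Base (f + g) :=
  ⟨hf.1.add hg.1, hf.2.add hg.2⟩
theorem Base.mul {f g : Fn} (hf : Base f) (hg : Base g) : Base (f * g) :=
  ⟨hf.1.mul hg.1, hf.2.mul hg.2⟩

theorem NiceN.add {n : ℕ} : ∀ {f g : Fn}, NiceN n f → NiceN n g → NiceN n (f + g) := by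
  induction n with
  | zero => intro f g hf hg; exact Base.add hf hg
  | succ n ih =>
    intro f g hf hg
    exact NiceN.mk' (hf.base.add hg.base) (fun t x => (hf.hdx t x).add (hg.hdx t x))
      (fun t x => (hf.hdt t x).add (hg.hdt t x)) (ih hf.2.2.2.1 hg.2.2.2.1)
      (ih hf.2.2.2.2 hg.2.2.2.2)

theorem NiceN.mul {n : ℕ} : ∀ {f g : Fn}, NiceN n f → NiceN n g → NiceN n (f * g) := by
  induction n with
  | zero => intro f g hf hg; exact Base.mul hf hg
  | succ n ih =>
    intro f g hf hg
    exact NiceN.mk' (gx := dx f * g + f * dx g) (gt := dt f * g + f * dt g)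
      (hf.base.mul hg.base) (fun t x => (hf.hdx t x).mul (hg.hdx t x))
      (fun t x => (hf.hdt t x).mul (hg.hdt t x))
      ((ih hf.2.2.2.1 hg.mono).add (ih hf.mono hg.2.2.2.1))
      ((ih hf.2.2.2.2 hg.mono).add (ih hf.mono hg.2.2.2.2))

/-- constant function -/
def cst (c : ℝ) : Fn := fun _ _ => c
/-- the parameter -/
def tt : Fn := fun t _ => t

theorem Base.cst (c : ℝ) : Base (cst c) :=
  ⟨continuous_const, Growth.of_bdd |c| fun _ _ => le_rfl⟩

theorem dx_cst (c : ℝ) : dx (cst c) = cst 0 := dx_eq fun _ x => hasDerivAt_const x c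
theorem dt_cst (c : ℝ) : dt (cst c) = cst 0 := dt_eq fun t _ => hasDerivAt_const t c

theorem NiceN.cst {n : ℕ} : ∀ c, NiceN n (cst c) := by
  induction n with
  | zero => exact Base.cst
  | succ n ih =>
    exact fun c => NiceN.mk' (Base.cst c) (fun _ x => hasDerivAt_const x c)
      (fun t _ => hasDerivAt_const t c) (ih 0) (ih 0)

theorem Nice.cst (c : ℝ) : Nice (cst c) := fun _ => NiceN.cst c
theorem dx_tt : dx tt = PS.cst 0 := dx_eq fun t x => hasDerivAt_const x t
theorem dt_tt : dt tt = PS.cst 1 := dt_eq fun t _ => hasDerivAt_id t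

theorem Base.tt : Base tt := by
  refine ⟨continuous_fst, fun T => ⟨|T|, 0, abs_nonneg _, le_rfl, fun t x h => ?_⟩⟩
  simpa [PS.tt] using h.trans (le_abs_self T)

theorem Nice.tt : Nice tt := by
  intro n
  cases n with
  | zero => exact Base.tt
  | succ n =>
    exact NiceN.mk' Base.tt (fun t x => hasDerivAt_const x t)
      (fun t _ => hasDerivAt_id t) (NiceN.cst 0) (NiceN.cst 1)

theorem Nice.add {f g : Fn} (hf : Nice f) (hg : Nice g) : Nice (f + g) :=
  fun n => (hf n).add (hg n)
theorem Nice.mul {f g : Fn} (hf : Nice f) (hg : Nice g) : Nice (f * g) :=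
  fun n => (hf n).mul (hg n)
theorem neg_eq (f : Fn) : -f = PS.cst (-1) * f := by funext t x; simp [PS.cst]
theorem Nice.neg {f : Fn} (hf : Nice f) : Nice (-f) := by
  rw [neg_eq]; exact (Nice.cst _).mul hf
theorem Nice.sub {f g : Fn} (hf : Nice f) (hg : Nice g) : Nice (f - g) := by
  rw [sub_eq_add_neg]; exact hf.add hg.neg

theorem dx_add {f g : Fn} (hf : Nice f) (hg : Nice g) : dx (f + g) = dx f + dx g :=
  dx_eq fun t x => (hf.hdx t x).add (hg.hdx t x)
theorem dt_add {f g : Fn} (hf : Nice f) (hg : Nice g) : dt (f + g) = dt f + dt g :=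
  dt_eq fun t x => (hf.hdt t x).add (hg.hdt t x)
theorem dx_sub {f g : Fn} (hf : Nice f) (hg : Nice g) : dx (f - g) = dx f - dx g :=
  dx_eq fun t x => (hf.hdx t x).sub (hg.hdx t x)
theorem dt_sub {f g : Fn} (hf : Nice f) (hg : Nice g) : dt (f - g) = dt f - dt g :=
  dt_eq fun t x => (hf.hdt t x).sub (hg.hdt t x)
theorem dx_mul {f g : Fn} (hf : Nice f) (hg : Nice g) : dx (f * g) = dx f * g + f * dx g :=
  dx_eq fun t x => (hf.hdx t x).mul (hg.hdx t x)
theorem dt_mul {f g : Fn} (hf : Nice f) (hg : Nice g) : dt (f * g) = dt f * g + f * dt g :=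
  dt_eq fun t x => (hf.hdt t x).mul (hg.hdt t x)

def expF (f : Fn) : Fn := fun t x => exp (f t x)
def logF (f : Fn) : Fn := fun t x => log (f t x)
def invF (f : Fn) : Fn := fun t x => (f t x)⁻¹

theorem expF_nice {f : Fn} (hf : Nice f) (hg : Growth (expF f)) : Nice (expF f) := by
  have hb : Base (expF f) := ⟨Real.continuous_exp.comp hf.base.1, hg⟩
  intro n
  induction n with
  | zero => exact hb
  | succ n ih =>
    refine NiceN.mk' (gx := expF f * dx f) (gt := expF f * dt f) hb
      (fun t x => (hf.hdx t x).exp) (fun t x => (hf.hdt t x).exp) ?_ ?_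
    · exact ih.mul (hf.dx n)
    · exact ih.mul (hf.dt n)

theorem invF_nice {f : Fn} (hf : Nice f) (h1 : ∀ t x, 1 ≤ f t x) : Nice (invF f) := by
  have h0 : ∀ t x, f t x ≠ 0 := fun t x => by have := h1 t x; positivity
  have hb : Base (invF f) := by
    refine ⟨hf.base.1.inv₀ fun z => h0 z.1 z.2, Growth.of_bdd 1 fun t x => ?_⟩
    have := h1 t x
    rw [invF, abs_of_nonneg (by positivity)]
    exact inv_le_one_of_one_le₀ this
  intro n
  induction n with
  | zero => exact hb
  | succ n ih =>
    refine NiceN.mk' (gx := PS.cst (-1) * dx f * (invF f * invF f))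
      (gt := PS.cst (-1) * dt f * (invF f * invF f)) hb
      (fun t x => ?_) (fun t x => ?_) ?_ ?_
    · refine ((hf.hdx t x).fun_inv (h0 t x)).congr_deriv ?_
      have := h0 t x
      simp only [Pi.mul_apply, PS.cst, invF]; field_simp
    · refine ((hf.hdt t x).fun_inv (h0 t x)).congr_deriv ?_
      have := h0 t x
      simp only [Pi.mul_apply, PS.cst, invF]; field_simp
    · exact ((NiceN.cst _).mul (hf.dx n)).mul (ih.mul ih)
    · exact ((NiceN.cst _).mul (hf.dt n)).mul (ih.mul ih)

theorem logF_hdx {f : Fn} (hf : Nice f) (h1 : ∀ t x, 1 ≤ f t x) (t x : ℝ) :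
    HasDerivAt (fun y => logF f t y) ((dx f * invF f) t x) x := by
  have h0 : f t x ≠ 0 := by have := h1 t x; positivity
  exact ((hf.hdx t x).log h0)

theorem logF_hdt {f : Fn} (hf : Nice f) (h1 : ∀ t x, 1 ≤ f t x) (t x : ℝ) :
    HasDerivAt (fun y => logF f y x) ((dt f * invF f) t x) t := by
  have h0 : f t x ≠ 0 := by have := h1 t x; positivity
  exact ((hf.hdt t x).log h0)

theorem logF_nice {f : Fn} (hf : Nice f) (h1 : ∀ t x, 1 ≤ f t x) : Nice (logF f) := by
  have h0 : ∀ t x, f t x ≠ 0 := fun t x => by have := h1 t x; positivity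
  have hb : Base (logF f) := by
    refine ⟨hf.base.1.log fun z => h0 z.1 z.2, fun T => ?_⟩
    obtain ⟨C, K, hC, hK, h⟩ := hf.base.2 T
    refine ⟨C, K, hC, hK, fun t x ht => ?_⟩
    refine le_trans ?_ (h t x ht)
    have := h1 t x
    rw [logF, abs_of_nonneg (Real.log_nonneg this), abs_of_nonneg (by linarith)]
    exact Real.log_le_self (by linarith)
  intro n
  cases n with
  | zero => exact hb
  | succ n =>
    exact NiceN.mk' hb (logF_hdx hf h1) (logF_hdt hf h1)
      ((hf.dx n).mul (invF_nice hf h1 n)) ((hf.dt n).mul (invF_nice hf h1 n))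

/-- joint differentiability -/
theorem Nice.hasStrict {g : Fn} (hg : Nice g) (t x : ℝ) :
    HasStrictFDerivAt (fun z : ℝ × ℝ => g z.1 z.2)
      (((1 : ℝ →L[ℝ] ℝ).smulRight (PS.dt g t x)).coprod
        ((1 : ℝ →L[ℝ] ℝ).smulRight (PS.dx g t x))) (t, x) := by
  have := hasStrictFDerivAt_uncurry_coprod (𝕜 := ℝ) (u := (t, x)) (f := g)
    (f₁ := fun t x => (1 : ℝ →L[ℝ] ℝ).smulRight (PS.dt g t x))
    (f₂ := fun t x => (1 : ℝ →L[ℝ] ℝ).smulRight (PS.dx g t x))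
    (Eventually.of_forall fun v => (hg.hdt v.1 v.2).hasFDerivAt)
    (Eventually.of_forall fun v => (hg.hdx v.1 v.2).hasFDerivAt) ?_ ?_
  · exact this
  · have := hg.dt.base.1
    refine Continuous.continuousAt ?_
    exact ((ContinuousLinearMap.smulRightL ℝ ℝ ℝ) 1).continuous.comp this
  · have := hg.dx.base.1
    refine Continuous.continuousAt ?_
    exact ((ContinuousLinearMap.smulRightL ℝ ℝ ℝ) 1).continuous.comp this

theorem Nice.hasDerivAt_comp {g : Fn} (hg : Nice g) {a b : ℝ → ℝ} {a' b' s : ℝ}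
    (ha : HasDerivAt a a' s) (hb : HasDerivAt b b' s) :
    HasDerivAt (fun s => g (a s) (b s)) (a' * PS.dt g (a s) (b s) + b' * PS.dx g (a s) (b s)) s := by
  have h := (hg.hasStrict (a s) (b s)).hasFDerivAt.comp_hasDerivAt s (ha.prodMk hb)
  refine HasDerivAt.congr_deriv (f := fun s => g (a s) (b s)) h ?_
  simp

theorem dx_dt_comm {g : Fn} (hg : Nice g) : dx (dt g) = dt (dx g) := by
  funext t x
  let f' : ℝ × ℝ → (ℝ × ℝ →L[ℝ] ℝ) := fun z =>
    ((1 : ℝ →L[ℝ] ℝ).smulRight (dt g z.1 z.2)).coprod ((1 : ℝ →L[ℝ] ℝ).smulRight (dx g z.1 z.2))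
  have hf : ∀ z : ℝ × ℝ, HasFDerivAt (fun z : ℝ × ℝ => g z.1 z.2) (f' z) z := fun z =>
    (hg.hasStrict z.1 z.2).hasFDerivAt
  have hd : DifferentiableAt ℝ f' (t, x) := by
    have e : f' = fun z => (dt g z.1 z.2) • ContinuousLinearMap.fst ℝ ℝ ℝ +
        (dx g z.1 z.2) • ContinuousLinearMap.snd ℝ ℝ ℝ := by
      funext z; ext <;> simp [f']
    rw [e]
    have h1 := (hg.dt.hasStrict t x).hasFDerivAt.differentiableAt
    have h2 := (hg.dx.hasStrict t x).hasFDerivAt.differentiableAt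
    exact (h1.smul_const _).add (h2.smul_const _)
  have hs := second_derivative_symmetric hf hd.hasFDerivAt (1, 0) (0, 1)
  have h3 : HasDerivAt (fun s => f' (s, x)) (fderiv ℝ f' (t, x) (1, 0)) t := by
    have := hd.hasFDerivAt.comp_hasDerivAt t ((hasDerivAt_id t).prodMk (hasDerivAt_const t x))
    exact this
  have h4 : HasDerivAt (fun s => f' (t, s)) (fderiv ℝ f' (t, x) (0, 1)) x := by
    have := hd.hasFDerivAt.comp_hasDerivAt x ((hasDerivAt_const x t).prodMk (hasDerivAt_id x))
    exact this
  have h5 := h3.clm_apply (hasDerivAt_const t ((0 : ℝ), (1 : ℝ)))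
  have h6 := h4.clm_apply (hasDerivAt_const x ((1 : ℝ), (0 : ℝ)))
  simp [f'] at h5 h6
  have h7 := (hg.dx.hdt t x).unique h5
  have h8 := (hg.dt.hdx t x).unique h6
  rw [h7, h8, hs]

end PS

namespace PS

/-- standard Gaussian -/
abbrev gam : Measure ℝ := gaussianReal 0 1

theorem int_exp_abs (k : ℝ) : Integrable (fun z : ℝ => exp (k * |z|)) gam :=
  integrable_exp_mul_abs (X := fun z => z) (integrable_exp_mul_gaussianReal k)
    (integrable_exp_mul_gaussianReal (-k))

theorem int_of_growth {f : ℝ → ℝ} (hf : Continuous f) {C K : ℝ}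
    (h : ∀ z, |f z| ≤ C * exp (K * |z|)) : Integrable f gam :=
  ((int_exp_abs K).const_mul C).mono' hf.aestronglyMeasurable (Eventually.of_forall h)

theorem abs_le_exp_abs (z : ℝ) : |z| ≤ exp (1 * |z|) := by
  have := Real.add_one_le_exp |z|
  rw [one_mul]; linarith

theorem pdf_deriv (z : ℝ) :
    HasDerivAt (gaussianPDFReal 0 1) (-z * gaussianPDFReal 0 1 z) z := by
  have e : gaussianPDFReal 0 1 = fun x => (√(2 * π * 1))⁻¹ * rexp (-(x - 0) ^ 2 / (2 * 1)) := by
    rw [gaussianPDFReal_def]; rfl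
  rw [e]
  have h1 : HasDerivAt (fun x : ℝ => -(x - 0) ^ 2 / (2 * 1)) (-z) z := by
    have := ((((hasDerivAt_id z).sub_const 0).pow 2).neg).div_const (2 * 1)
    refine this.congr_deriv ?_
    simp
    ring
  refine (h1.exp.const_mul _).congr_deriv ?_
  ring

theorem int_pdf {f : ℝ → ℝ} (hf : Integrable f gam) :
    Integrable (fun z => f z * gaussianPDFReal 0 1 z) := by
  rw [gam, gaussianReal_of_var_ne_zero 0 one_ne_zero,
    integrable_withDensity_iff (measurable_gaussianPDF 0 1)
      (Eventually.of_forall fun _ => gaussianPDF_lt_top)] at hf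
  simpa using hf

theorem stein {f f' : ℝ → ℝ} (hd : ∀ z, HasDerivAt f (f' z) z) (hc' : Continuous f')
    {C K C' K' : ℝ} (hC : ∀ z, |f z| ≤ C * exp (K * |z|))
    (hC' : ∀ z, |f' z| ≤ C' * exp (K' * |z|)) :
    ∫ z, z * f z ∂gam = ∫ z, f' z ∂gam := by
  have hc : Continuous f := continuous_iff_continuousAt.2 fun z => (hd z).continuousAt
  have i1 := int_of_growth hc hC
  have i2 := int_of_growth hc' hC'
  have i3 : Integrable (fun z => z * f z) gam := by
    refine int_of_growth (C := C) (K := K + 1) (by fun_prop) fun z => ?_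
    rw [abs_mul, add_mul, Real.exp_add]
    calc |z| * |f z| ≤ exp (1 * |z|) * (C * exp (K * |z|)) :=
          mul_le_mul (abs_le_exp_abs z) (hC z) (abs_nonneg _) (by positivity)
      _ = _ := by ring
  have key := integral_mul_deriv_eq_deriv_mul_of_integrable (u := f) (u' := f')
    (v := gaussianPDFReal 0 1) (v' := fun z => -z * gaussianPDFReal 0 1 z)
    (fun z _ => hd z) (fun z _ => pdf_deriv z) ?_ (int_pdf i2) (int_pdf i1)
  · rw [gam, integral_gaussianReal_eq_integral_smul one_ne_zero,
      integral_gaussianReal_eq_integral_smul one_ne_zero]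
    simp only [smul_eq_mul]
    have e1 : ∀ x, gaussianPDFReal 0 1 x * (x * f x) = -(f x * (-x * gaussianPDFReal 0 1 x)) := by
      intro x; ring
    simp_rw [e1]
    rw [integral_neg, key, neg_neg]
    congr 1; funext x; ring
  · refine (int_pdf i3).neg.congr (Eventually.of_forall fun z => ?_)
    simp only [Pi.neg_apply, Pi.mul_apply]; ring

/-- averaging over a scaled Gaussian -/
def S1 (r b : ℝ) (g : Fn) : Fn := fun t x => ∫ z, g t (x + (r + b * t) * z) ∂gam

theorem growth_loc {g : Fn} (hg : Growth g) (r b T X : ℝ) : ∃ C K, 0 ≤ C ∧ 0 ≤ K ∧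
    ∀ t x z, |t| ≤ T → |x| ≤ X → |g t (x + (r + b * t) * z)| ≤ C * exp (K * |z|) := by
  obtain ⟨C, K, hC, hK, h⟩ := hg T
  refine ⟨C * exp (K * X), K * (|r| + |b| * |T|), by positivity, by positivity,
    fun t x z ht hx => (h t _ ht).trans ?_⟩
  rw [mul_assoc C, ← Real.exp_add]
  gcongr
  have h1 : |x + (r + b * t) * z| ≤ X + (|r| + |b| * |T|) * |z| := by
    calc |x + (r + b * t) * z| ≤ |x| + |(r + b * t) * z| := abs_add_le _ _
      _ = |x| + |r + b * t| * |z| := by rw [abs_mul]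
      _ ≤ X + (|r| + |b| * |T|) * |z| := by
        gcongr
        calc |r + b * t| ≤ |r| + |b * t| := abs_add_le _ _
          _ = |r| + |b| * |t| := by rw [abs_mul]
          _ ≤ _ := by linarith [mul_le_mul_of_nonneg_left (ht.trans (le_abs_self T)) (abs_nonneg b)]
  calc K * |x + (r + b * t) * z| ≤ K * (X + (|r| + |b| * |T|) * |z|) := by gcongr
    _ = _ := by ring

theorem Base.cont_z {g : Fn} (hg : Base g) (r b t x : ℝ) :
    Continuous fun z => g t (x + (r + b * t) * z) := (hg.contx t).comp (by fun_prop)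

theorem Base.int_z {g : Fn} (hg : Base g) (r b t x : ℝ) :
    Integrable (fun z => g t (x + (r + b * t) * z)) gam := by
  obtain ⟨C, K, _, _, h⟩ := growth_loc hg.2 r b |t| |x|
  exact int_of_growth (hg.cont_z r b t x) fun z => h t x z le_rfl le_rfl

theorem near (t₀ : ℝ) : {t : ℝ | |t| ≤ |t₀| + 1} ∈ 𝓝 t₀ := by
  have : Metric.ball t₀ 1 ⊆ {t : ℝ | |t| ≤ |t₀| + 1} := by
    intro t ht
    rw [Metric.mem_ball, Real.dist_eq] at ht
    have : |t| ≤ |t₀| + |t - t₀| := by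
      simpa using abs_add_le t₀ (t - t₀)
    simp only [Set.mem_ofPred_eq]; linarith
  exact mem_of_superset (Metric.ball_mem_nhds _ one_pos) this

theorem Base.S1 {g : Fn} (hg : Base g) (r b : ℝ) : Base (S1 r b g) := by
  constructor
  · refine continuous_iff_continuousAt.2 fun z₀ => ?_
    obtain ⟨C, K, _, _, h⟩ := growth_loc hg.2 r b (|z₀.1| + 1) (|z₀.2| + 1)
    refine continuousAt_of_dominated (bound := fun z => C * exp (K * |z|))
      (Eventually.of_forall fun w => (hg.cont_z r b w.1 w.2).aestronglyMeasurable) ?_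
      ((int_exp_abs K).const_mul C) (Eventually.of_forall fun z => ?_)
    · have h1 := continuousAt_fst (near z₀.1 : _ ∈ 𝓝 (Prod.fst z₀))
      have h2 := continuousAt_snd (near z₀.2 : _ ∈ 𝓝 (Prod.snd z₀))
      filter_upwards [h1, h2] with w hw1 hw2
      exact Eventually.of_forall fun z => h w.1 w.2 z hw1 hw2
    · refine Continuous.continuousAt ?_
      exact hg.1.comp (by fun_prop : Continuous fun w : ℝ × ℝ => (w.1, w.2 + (r + b * w.1) * z))
  · intro T
    obtain ⟨C, K, hC, hK, h⟩ := hg.2 T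
    set ρ := |r| + |b| * |T|
    refine ⟨C * ∫ z, exp (K * ρ * |z|) ∂gam, K, by positivity, hK, fun t x ht => ?_⟩
    calc |PS.S1 r b g t x| ≤ ∫ z, |g t (x + (r + b * t) * z)| ∂gam := abs_integral_le_integral_abs
      _ ≤ ∫ z, C * exp (K * |x|) * exp (K * ρ * |z|) ∂gam := by
        refine integral_mono (hg.int_z r b t x).abs ((int_exp_abs _).const_mul _) fun z => ?_
        refine (h t _ ht).trans ?_
        rw [mul_assoc C, ← Real.exp_add]
        gcongr
        have h1 : |x + (r + b * t) * z| ≤ |x| + ρ * |z| := by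
          calc |x + (r + b * t) * z| ≤ |x| + |(r + b * t) * z| := abs_add_le _ _
            _ = |x| + |r + b * t| * |z| := by rw [abs_mul]
            _ ≤ |x| + ρ * |z| := by
              gcongr
              calc |r + b * t| ≤ |r| + |b * t| := abs_add_le _ _
                _ = |r| + |b| * |t| := by rw [abs_mul]
                _ ≤ _ := by
                  have := mul_le_mul_of_nonneg_left (ht.trans (le_abs_self T)) (abs_nonneg b)
                  linarith
        calc K * |x + (r + b * t) * z| ≤ K * (|x| + ρ * |z|) := by gcongr
          _ = _ := by ring
      _ = _ := by rw [integral_const_mul]; ring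

theorem S1_hdx {g : Fn} (hg : Nice g) (r b t x : ℝ) :
    HasDerivAt (fun y => S1 r b g t y) (S1 r b (dx g) t x) x := by
  obtain ⟨C, K, _, _, h⟩ := growth_loc hg.dx.base.2 r b |t| (|x| + 1)
  refine (hasDerivAt_integral_of_dominated_loc_of_deriv_le (𝕜 := ℝ) (μ := gam)
    (F := fun y z => g t (y + (r + b * t) * z)) (F' := fun y z => dx g t (y + (r + b * t) * z))
    (bound := fun z => C * exp (K * |z|)) (near x)
    (Eventually.of_forall fun w => (hg.base.cont_z r b t w).aestronglyMeasurable)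
    (hg.base.int_z r b t x) (hg.dx.base.cont_z r b t x).aestronglyMeasurable
    (Eventually.of_forall fun z y hy => h t y z le_rfl hy)
    ((int_exp_abs K).const_mul C) (Eventually.of_forall fun z y _ => ?_)).2
  exact (hg.hdx t (y + (r + b * t) * z)).comp_add_const y _

theorem S1_hdt {g : Fn} (hg : Nice g) (r b t x : ℝ) :
    HasDerivAt (fun s => S1 r b g s x)
      (S1 r b (dt g) t x + b * (r + b * t) * S1 r b (dx (dx g)) t x) t := by
  obtain ⟨C, K, hC0, hK0, h⟩ := growth_loc hg.dx.base.2 r b (|t| + 1) |x|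
  obtain ⟨C', K', hC0', hK0', h'⟩ := growth_loc hg.dt.base.2 r b (|t| + 1) |x|
  obtain ⟨C'', K'', _, _, h''⟩ := growth_loc hg.dx.dx.base.2 r b (|t| + 1) |x|
  have ci : Continuous fun z => b * (z * dx g t (x + (r + b * t) * z)) := by
    have := hg.dx.base.cont_z r b t x
    fun_prop
  have hb : ∀ s z, |s| ≤ |t| + 1 → |z * dx g s (x + (r + b * s) * z)| ≤
      C * exp ((K + 1) * |z|) := by
    intro s z hs
    rw [abs_mul, add_mul K, Real.exp_add]
    calc |z| * |dx g s (x + (r + b * s) * z)| ≤ exp (1 * |z|) * (C * exp (K * |z|)) :=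
          mul_le_mul (abs_le_exp_abs z) (h s x z hs le_rfl) (abs_nonneg _) (by positivity)
      _ = _ := by ring
  have ht1 : |t| ≤ |t| + 1 := by linarith
  have key := (hasDerivAt_integral_of_dominated_loc_of_deriv_le (𝕜 := ℝ) (μ := gam)
    (F := fun s z => g s (x + (r + b * s) * z))
    (F' := fun s z => dt g s (x + (r + b * s) * z) + b * (z * dx g s (x + (r + b * s) * z)))
    (bound := fun z => C' * exp (K' * |z|) + |b| * (C * exp ((K + 1) * |z|))) (near t)
    (Eventually.of_forall fun w => (hg.base.cont_z r b w x).aestronglyMeasurable)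
    (hg.base.int_z r b t x)
    ((hg.dt.base.cont_z r b t x).add ci).aestronglyMeasurable
    (Eventually.of_forall fun z s hs => ?_)
    (((int_exp_abs K').const_mul C').add (((int_exp_abs _).const_mul C).const_mul _))
    (Eventually.of_forall fun z s _ => ?_)).2
  · refine key.congr_deriv ?_
    have i2 : Integrable (fun z => b * (z * dx g t (x + (r + b * t) * z))) gam := by
      refine int_of_growth ci (C := |b| * C) (K := K + 1) fun z => ?_
      rw [abs_mul, mul_assoc]
      gcongr
      exact hb t z ht1
    rw [integral_add (hg.dt.base.int_z r b t x) i2, integral_const_mul,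
      stein (f := fun z => dx g t (x + (r + b * t) * z))
        (f' := fun z => (r + b * t) * dx (dx g) t (x + (r + b * t) * z)) (C := C) (K := K)
        (C' := |r + b * t| * C'') (K' := K''), integral_const_mul]
    · rw [S1, S1]; ring
    · intro z
      have h1 : HasDerivAt (fun z : ℝ => x + (r + b * t) * z) (r + b * t) z := by
        simpa using ((hasDerivAt_id z).const_mul (r + b * t)).const_add x
      have := (hg.dx.hdx t (x + (r + b * t) * z)).comp z h1
      exact this.congr_deriv (mul_comm _ _)
    · exact continuous_const.mul (hg.dx.dx.base.cont_z r b t x)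
    · exact fun z => h t x z ht1 le_rfl
    · intro z
      rw [abs_mul, mul_assoc]
      gcongr
      exact h'' t x z ht1 le_rfl
  · refine (norm_add_le _ _).trans (add_le_add (h' s x z hs le_rfl) ?_)
    rw [norm_mul]
    exact mul_le_mul_of_nonneg_left (hb s z hs) (abs_nonneg b)
  · have h1 : HasDerivAt (fun s : ℝ => x + (r + b * s) * z) (b * z) s := by
      simpa using ((((hasDerivAt_id s).const_mul b).const_add r).mul_const z).const_add x
    refine (hg.hasDerivAt_comp (hasDerivAt_id s) h1).congr_deriv ?_
    simp only [id]; ring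

/-- averaging over a Gaussian of variance `a + c t^2` -/
def Sg (a c : ℝ) (g : Fn) : Fn := fun t x => ∫ y, g t (x + y) ∂(gauss (a + c * t ^ 2))

theorem gauss_sq (s : ℝ) : gaussianReal 0 (s ^ 2).toNNReal = gam.map (s * ·) := by
  rw [gam, gaussianReal_map_const_mul]
  congr 1
  · simp
  · rw [mul_one]; exact Real.toNNReal_of_nonneg (sq_nonneg s)

theorem Sg_eq {a c : ℝ} (ha : 0 ≤ a) (hc : 0 ≤ c) {g : Fn} (hg : Base g) :
    Sg a c g = S1 (√a) 0 (S1 0 (√c) g) := by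
  funext t x
  have e0 : gauss (a + c * t ^ 2) =
      (gam.map ((√a) * ·)) ∗ (gam.map ((√c * t) * ·)) := by
    rw [← gauss_sq, ← gauss_sq, gaussianReal_conv_gaussianReal, gauss]
    congr 1
    · simp
    · rw [Real.sq_sqrt ha, mul_pow, Real.sq_sqrt hc, Real.toNNReal_add ha (by positivity)]
  have hIntegr : Integrable (fun y => g t (x + y)) (gauss (a + c * t ^ 2)) := by
    have : gauss (a + c * t ^ 2) = gam.map (√(a + c * t ^ 2) * ·) := by
      rw [← gauss_sq, Real.sq_sqrt (by positivity)]; rfl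
    rw [this, integrable_map_measure]
    · have := hg.int_z (√(a + c * t ^ 2)) 0 t x
      simpa [Function.comp_def] using this
    · exact ((hg.contx t).comp (by fun_prop)).aestronglyMeasurable
    · fun_prop
  rw [Sg]
  rw [e0] at hIntegr ⊢
  rw [integral_conv hIntegr, integral_map (by fun_prop)]
  · simp only [S1]
    congr 1; funext z
    rw [integral_map (by fun_prop)]
    · congr 1; funext w; congr 1; ring
    · exact ((hg.contx t).comp (by fun_prop)).aestronglyMeasurable
  · have h2 : (fun x_1 => ∫ y, g t (x + (x_1 + y)) ∂gam.map ((√c * t) * ·)) =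
        fun x_1 => S1 0 (√c) g t (x + x_1) := by
      funext z
      simp only [S1]
      rw [integral_map (by fun_prop)]
      · congr 1; funext w; congr 1; ring
      · exact ((hg.contx t).comp (by fun_prop)).aestronglyMeasurable
    rw [h2]
    exact (((hg.S1 0 (√c)).contx t).comp (by fun_prop)).aestronglyMeasurable

theorem S1_nice {g : Fn} (hg : Nice g) (r b : ℝ) : Nice (S1 r b g) := by
  intro n
  induction n generalizing g with
  | zero => exact hg.base.S1 r b
  | succ n ih =>
    refine NiceN.mk' (gx := S1 r b (dx g))
      (gt := S1 r b (dt g) + (PS.cst b * (PS.cst r + PS.cst b * tt)) * S1 r b (dx (dx g)))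
      (hg.base.S1 r b) (S1_hdx hg r b) (S1_hdt hg r b) (ih hg.dx) ?_
    exact (ih hg.dt).add ((((Nice.cst b).mul ((Nice.cst r).add
      ((Nice.cst b).mul Nice.tt))) n).mul (ih hg.dx.dx))

theorem Sg_nice {a c : ℝ} (ha : 0 ≤ a) (hc : 0 ≤ c)
    {g : Fn} (hg : Nice g) : Nice (Sg a c g) := by
  rw [Sg_eq ha hc hg.base]; exact S1_nice (S1_nice hg _ _) _ _

theorem dx_Sg {a c : ℝ} (ha : 0 ≤ a) (hc : 0 ≤ c)
    {g : Fn} (hg : Nice g) : dx (Sg a c g) = Sg a c (dx g) := by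
  rw [Sg_eq ha hc hg.base, Sg_eq ha hc hg.dx.base, dx_eq (S1_hdx (S1_nice hg _ _) _ _),
    dx_eq (S1_hdx hg _ _)]

theorem Sg_int {a c : ℝ} (ha : 0 ≤ a) (hc : 0 ≤ c)
    {g : Fn} (hg : Base g) (t x : ℝ) :
    Integrable (fun y => g t (x + y)) (gauss (a + c * t ^ 2)) := by
  have : gauss (a + c * t ^ 2) = gam.map (√(a + c * t ^ 2) * ·) := by
    rw [← gauss_sq, Real.sq_sqrt (by positivity)]; rfl
  rw [this, integrable_map_measure]
  · have := hg.int_z (√(a + c * t ^ 2)) 0 t x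
    simpa [Function.comp_def] using this
  · exact ((hg.contx t).comp (by fun_prop)).aestronglyMeasurable
  · fun_prop

theorem Sg_add {a c : ℝ} (ha : 0 ≤ a) (hc : 0 ≤ c)
    {f g : Fn} (hf : Base f) (hg : Base g) : Sg a c (f + g) = Sg a c f + Sg a c g := by
  funext t x
  exact integral_add (Sg_int ha hc hf t x) (Sg_int ha hc hg t x)

theorem Sg_mono {a c : ℝ} (ha : 0 ≤ a) (hc : 0 ≤ c)
    {f g : Fn} (hf : Base f) (hg : Base g) {t : ℝ} (h : ∀ x, f t x ≤ g t x) (x : ℝ) :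
    Sg a c f t x ≤ Sg a c g t x :=
  integral_mono (Sg_int ha hc hf t x) (Sg_int ha hc hg t x) fun y => h (x + y)

/-- multiplication by a function of `t` only -/
theorem Sg_tmul {a c : ℝ} (φ : ℝ → ℝ) (g : Fn) :
    Sg a c (fun t x => φ t * g t x) = fun t x => φ t * Sg a c g t x := by
  funext t x
  simp only [Sg, integral_const_mul]

theorem Sg_cst {a c : ℝ} (d : ℝ) : Sg a c (PS.cst d) = PS.cst d := by
  funext t x
  have : IsProbabilityMeasure (gauss (a + c * t ^ 2)) := by unfold gauss; infer_instance
  simp [Sg, PS.cst]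

theorem dt_Sg {a c : ℝ} (ha : 0 ≤ a) (hc : 0 ≤ c)
    {g : Fn} (hg : Nice g) :
    dt (Sg a c g) = Sg a c (dt g) + PS.cst c * tt * Sg a c (dx (dx g)) := by
  rw [Sg_eq ha hc hg.base, Sg_eq ha hc hg.dt.base, Sg_eq ha hc hg.dx.dx.base]
  refine dt_eq fun t x => ?_
  have h1 := S1_hdt (S1_nice hg 0 (√c)) (√a) 0 t x
  refine h1.congr_deriv ?_
  have h2 : dt (S1 0 (√c) g) = fun t x => S1 0 (√c) (dt g) t x +
      √c * (0 + √c * t) * S1 0 (√c) (dx (dx g)) t x := dt_eq (S1_hdt hg 0 (√c))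
  have i1 := (S1_nice hg.dt 0 (√c)).base.int_z (√a) 0 t x
  have i2 := (S1_nice hg.dx.dx 0 (√c)).base.int_z (√a) 0 t x
  have hcc : √c * √c = c := Real.mul_self_sqrt hc
  rw [h2, S1]
  simp only [zero_mul, add_zero] at i1 i2 ⊢
  simp only [Pi.add_apply, Pi.mul_apply, PS.cst, tt]
  rw [integral_add i1 (i2.const_mul _), integral_const_mul]
  simp only [S1, zero_mul, add_zero]
  linear_combination (t * ∫ z, ∫ w, dx (dx g) t (x + √a * z + (0 + √c * t) * w) ∂gam ∂gam) * hcc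

end PS

namespace PS

structure Adm (u : Fn) : Prop where
  nice : Nice u
  nonneg : ∀ t x, 0 ≤ u t x
  lip : ∀ t x, |dx u t x| ≤ 1

def Wt (m : ℝ) (u : Fn) : Fn := expF (cst m * u)
/-- the tilted averaging operator -/
def Mo (a c m : ℝ) (u f : Fn) : Fn := Sg a c (f * Wt m u) * invF (Sg a c (Wt m u))
/-- one step of the recursion -/
def Up (a c m : ℝ) (u : Fn) : Fn :=
  if m = 0 then Sg a c u else cst (1 / m) * logF (Sg a c (Wt m u))
def Hf (m : ℝ) (u : Fn) : Fn := dx (dx u) + cst m * (dx u * dx u)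

theorem Adm.le_lin {u : Fn} (hu : Adm u) (t x : ℝ) : u t x ≤ u t 0 + |x| := by
  have h := Convex.norm_image_sub_le_of_norm_hasDerivWithin_le (f := u t) (f' := dx u t) (C := 1)
    (s := Set.univ) (x := 0) (y := x) (fun y _ => (hu.nice.hdx t y).hasDerivWithinAt)
    (fun y _ => hu.lip t y) convex_univ (Set.mem_univ _) (Set.mem_univ _)
  rw [Real.norm_eq_abs, Real.norm_eq_abs, sub_zero, one_mul] at h
  linarith [le_abs_self (u t x - u t 0)]

theorem Wt_nice {m : ℝ} (hm : 0 ≤ m) {u : Fn} (hu : Adm u) : Nice (Wt m u) := by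
  refine expF_nice ((Nice.cst m).mul hu.nice) fun T => ?_
  obtain ⟨C, K, hC, hK, h⟩ := hu.nice.base.2 T
  refine ⟨exp (m * C), m, by positivity, hm, fun t x ht => ?_⟩
  rw [expF, abs_of_pos (exp_pos _), ← Real.exp_add]
  gcongr
  have h0 := h t 0 ht
  simp only [abs_zero, mul_zero, exp_zero, mul_one] at h0
  have := hu.le_lin t x
  have h1 : u t x ≤ C + |x| := by linarith [le_abs_self (u t 0)]
  calc (cst m * u) t x = m * u t x := rfl
    _ ≤ m * (C + |x|) := by gcongr
    _ = _ := by ring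

theorem Wt_ge {m : ℝ} (hm : 0 ≤ m) {u : Fn} (hu : Adm u) (t x : ℝ) : 1 ≤ Wt m u t x :=
  Real.one_le_exp (mul_nonneg hm (hu.nonneg t x))

theorem dx_Wt {m : ℝ} {u : Fn} (hu : Adm u) : dx (Wt m u) = cst m * dx u * Wt m u := by
  refine dx_eq fun t x => ?_
  refine (((Nice.cst m).mul hu.nice).hdx t x).exp.congr_deriv ?_
  rw [dx_mul (Nice.cst m) hu.nice, dx_cst]
  simp only [Pi.add_apply, Pi.mul_apply, cst, Wt, expF]; ring

theorem dt_Wt {m : ℝ} {u : Fn} (hu : Adm u) : dt (Wt m u) = cst m * dt u * Wt m u := by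
  refine dt_eq fun t x => ?_
  refine (((Nice.cst m).mul hu.nice).hdt t x).exp.congr_deriv ?_
  rw [dt_mul (Nice.cst m) hu.nice, dt_cst]
  simp only [Pi.add_apply, Pi.mul_apply, cst, Wt, expF]; ring

theorem dx_invF {f : Fn} (hf : Nice f) (h1 : ∀ t x, 1 ≤ f t x) :
    dx (invF f) = -(dx f * (invF f * invF f)) := by
  refine dx_eq fun t x => ?_
  have h0 : f t x ≠ 0 := by have := h1 t x; positivity
  refine ((hf.hdx t x).fun_inv h0).congr_deriv ?_
  simp only [Pi.mul_apply, Pi.neg_apply, invF]; field_simp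

theorem dt_invF {f : Fn} (hf : Nice f) (h1 : ∀ t x, 1 ≤ f t x) :
    dt (invF f) = -(dt f * (invF f * invF f)) := by
  refine dt_eq fun t x => ?_
  have h0 : f t x ≠ 0 := by have := h1 t x; positivity
  refine ((hf.hdt t x).fun_inv h0).congr_deriv ?_
  simp only [Pi.mul_apply, Pi.neg_apply, invF]; field_simp

theorem Sg_smul {a c : ℝ} (d : ℝ) (g : Fn) : Sg a c (cst d * g) = cst d * Sg a c g :=
  Sg_tmul (fun _ => d) g
theorem Sg_tt {a c : ℝ} (g : Fn) : Sg a c (tt * g) = tt * Sg a c g :=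
  Sg_tmul (fun t => t) g

/-- parameters of one step are admissible -/
structure StepOK (a c m : ℝ) (u : Fn) : Prop where
  ha : 0 ≤ a
  hc : 0 ≤ c
  hm : 0 ≤ m
  adm : Adm u

namespace StepOK
variable {a c m : ℝ} {u : Fn}

theorem W (h : StepOK a c m u) : Nice (Wt m u) := Wt_nice h.hm h.adm
theorem SW (h : StepOK a c m u) : Nice (Sg a c (Wt m u)) := Sg_nice h.ha h.hc h.W
theorem SW_ge (h : StepOK a c m u) (t x : ℝ) : 1 ≤ Sg a c (Wt m u) t x := by
  have := Sg_mono h.ha h.hc (Base.cst 1) h.W.base (t := t) (fun x => Wt_ge h.hm h.adm t x) x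
  rwa [Sg_cst] at this
theorem R (h : StepOK a c m u) : Nice (invF (Sg a c (Wt m u))) := invF_nice h.SW h.SW_ge
theorem SR (h : StepOK a c m u) : Sg a c (Wt m u) * invF (Sg a c (Wt m u)) = 1 := by
  funext t x
  have : Sg a c (Wt m u) t x ≠ 0 := by have := h.SW_ge t x; positivity
  simp only [Pi.mul_apply, invF, Pi.one_apply]
  exact mul_inv_cancel₀ this
theorem H (h : StepOK a c m u) : Nice (Hf m u) :=
  h.adm.nice.dx.dx.add ((Nice.cst m).mul (h.adm.nice.dx.mul h.adm.nice.dx))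

theorem M_nice (h : StepOK a c m u) {f : Fn} (hf : Nice f) : Nice (Mo a c m u f) :=
  (Sg_nice h.ha h.hc (hf.mul h.W)).mul h.R
theorem M_add (h : StepOK a c m u) {f g : Fn} (hf : Nice f) (hg : Nice g) :
    Mo a c m u (f + g) = Mo a c m u f + Mo a c m u g := by
  simp only [Mo, add_mul, Sg_add h.ha h.hc (hf.mul h.W).base (hg.mul h.W).base]
theorem M_smul (d : ℝ) (f : Fn) : Mo a c m u (cst d * f) = cst d * Mo a c m u f := by
  simp only [Mo, mul_assoc, Sg_smul]
theorem M_tt (f : Fn) : Mo a c m u (tt * f) = tt * Mo a c m u f := by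
  simp only [Mo, mul_assoc, Sg_tt]
theorem M_sub (h : StepOK a c m u) {f g : Fn} (hf : Nice f) (hg : Nice g) :
    Mo a c m u (f - g) = Mo a c m u f - Mo a c m u g := by
  rw [sub_eq_add_neg, neg_eq, h.M_add hf ((Nice.cst _).mul hg), M_smul, ← neg_eq, ← sub_eq_add_neg]
theorem M_neg (f : Fn) : Mo a c m u (-f) = - Mo a c m u f := by
  rw [neg_eq, M_smul, ← neg_eq]
theorem M_cst (h : StepOK a c m u) (d : ℝ) : Mo a c m u (cst d) = cst d := by
  rw [Mo, Sg_smul, mul_assoc, h.SR, mul_one]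
theorem M_mono (h : StepOK a c m u) {f g : Fn} (hf : Nice f) (hg : Nice g) {t : ℝ}
    (hfg : ∀ x, f t x ≤ g t x) (x : ℝ) : Mo a c m u f t x ≤ Mo a c m u g t x := by
  have h1 := h.SW_ge t x
  refine mul_le_mul_of_nonneg_right ?_ (inv_nonneg.2 (by linarith))
  refine Sg_mono h.ha h.hc (hf.mul h.W).base (hg.mul h.W).base (fun y => ?_) x
  have := Wt_ge h.hm h.adm t y
  exact mul_le_mul_of_nonneg_right (hfg y) (by linarith)
theorem M_le (h : StepOK a c m u) {f : Fn} (hf : Nice f) {t d : ℝ}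
    (hd : ∀ x, f t x ≤ d) (x : ℝ) : Mo a c m u f t x ≤ d := by
  have := h.M_mono hf (Nice.cst d) (t := t) hd x
  rwa [h.M_cst] at this
theorem le_M (h : StepOK a c m u) {f : Fn} (hf : Nice f) {t d : ℝ}
    (hd : ∀ x, d ≤ f t x) (x : ℝ) : d ≤ Mo a c m u f t x := by
  have := h.M_mono (Nice.cst d) hf (t := t) hd x
  rwa [h.M_cst] at this
theorem M_abs (h : StepOK a c m u) {f : Fn} (hf : Nice f) {t d : ℝ}
    (hd : ∀ x, |f t x| ≤ d) (x : ℝ) : |Mo a c m u f t x| ≤ d :=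
  abs_le.2 ⟨h.le_M hf (fun y => (abs_le.1 (hd y)).1) x, h.M_le hf (fun y => (abs_le.1 (hd y)).2) x⟩

theorem dx_M (h : StepOK a c m u) {f : Fn} (hf : Nice f) :
    dx (Mo a c m u f) = Mo a c m u (dx f) +
      cst m * (Mo a c m u (f * dx u) - Mo a c m u f * Mo a c m u (dx u)) := by
  have hu := h.adm.nice
  have hW := h.W
  have e1 : dx (f * Wt m u) = dx f * Wt m u + cst m * (f * dx u * Wt m u) := by
    rw [dx_mul hf hW, dx_Wt h.adm]; ring
  have e2 : Sg a c (cst m * dx u * Wt m u) = cst m * Sg a c (dx u * Wt m u) := by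
    rw [mul_assoc, Sg_smul]
  rw [Mo, dx_mul (Sg_nice h.ha h.hc (hf.mul hW)) h.R, dx_Sg h.ha h.hc (hf.mul hW), e1,
    dx_invF h.SW h.SW_ge, dx_Sg h.ha h.hc hW, dx_Wt h.adm, e2,
    Sg_add h.ha h.hc (hf.dx.mul hW).base ((Nice.cst m).mul ((hf.mul hu.dx).mul hW)).base, Sg_smul]
  simp only [Mo]
  ring

theorem dt_M (h : StepOK a c m u) {f : Fn} (hf : Nice f) :
    dt (Mo a c m u f) = Mo a c m u (dt f) +
      cst c * (tt * Mo a c m u (dx (dx f) + cst m * (dx f * dx u + dx f * dx u))) +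
      cst m * ((Mo a c m u (f * dt u) - Mo a c m u f * Mo a c m u (dt u)) +
        cst c * (tt * (Mo a c m u (f * Hf m u) - Mo a c m u f * Mo a c m u (Hf m u)))) := by
  have hu := h.adm.nice
  have hW := h.W
  have hx := hu.dx
  have hH := h.H
  have n1 : Nice (dx f * dx u + dx f * dx u) := (hf.dx.mul hx).add (hf.dx.mul hx)
  have n2 : Nice (dx (dx f) + cst m * (dx f * dx u + dx f * dx u)) :=
    hf.dx.dx.add ((Nice.cst m).mul n1)
  have e1 : dx (f * Wt m u) = dx f * Wt m u + cst m * (f * dx u * Wt m u) := by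
    rw [dx_mul hf hW, dx_Wt h.adm]; ring
  have e2 : dx (dx (f * Wt m u)) = (dx (dx f) + cst m * (dx f * dx u + dx f * dx u)) * Wt m u
      + cst m * (f * Hf m u * Wt m u) := by
    rw [e1, dx_add (hf.dx.mul hW) ((Nice.cst m).mul ((hf.mul hx).mul hW)),
      dx_mul hf.dx hW, dx_mul (Nice.cst m) ((hf.mul hx).mul hW), dx_mul (hf.mul hx) hW,
      dx_mul hf hx, dx_Wt h.adm, dx_cst, Hf]
    have : cst 0 = (0 : Fn) := rfl
    rw [this]
    ring
  have e3 : dt (f * Wt m u) = dt f * Wt m u + cst m * (f * dt u * Wt m u) := by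
    rw [dt_mul hf hW, dt_Wt h.adm]; ring
  have e4 : dx (dx (Wt m u)) = cst m * (Hf m u * Wt m u) := by
    rw [dx_Wt h.adm, dx_mul ((Nice.cst m).mul hx) hW, dx_mul (Nice.cst m) hx, dx_Wt h.adm, dx_cst,
      Hf]
    have : cst 0 = (0 : Fn) := rfl
    rw [this]
    ring
  have e5 : Sg a c (dt (Wt m u)) = cst m * Sg a c (dt u * Wt m u) := by
    rw [dt_Wt h.adm, mul_assoc, Sg_smul]
  rw [Mo, dt_mul (Sg_nice h.ha h.hc (hf.mul hW)) h.R, dt_Sg h.ha h.hc (hf.mul hW),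
    dt_invF h.SW h.SW_ge, dt_Sg h.ha h.hc hW, e5, e4, e2, e3, Sg_smul,
    Sg_add h.ha h.hc (hf.dt.mul hW).base ((Nice.cst m).mul ((hf.mul hu.dt).mul hW)).base, Sg_smul,
    Sg_add h.ha h.hc (n2.mul hW).base ((Nice.cst m).mul ((hf.mul hH).mul hW)).base, Sg_smul]
  simp only [Mo]
  ring

theorem Wt_zero : Wt 0 u = cst 1 := by
  funext t x; simp [Wt, expF, cst]

theorem M_zero (f : Fn) : Mo a c 0 u f = Sg a c f := by
  have h1 : f * cst 1 = f := mul_one f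
  have h2 : invF (cst 1) = 1 := by funext t x; simp [invF, cst]
  rw [Mo, Wt_zero, h1, Sg_cst, h2, mul_one]

theorem U_nice (h : StepOK a c m u) : Nice (Up a c m u) := by
  unfold Up
  split_ifs with hm
  · exact Sg_nice h.ha h.hc h.adm.nice
  · exact (Nice.cst _).mul (logF_nice h.SW h.SW_ge)

theorem cst_inv_mul {m : ℝ} (hm : m ≠ 0) : cst (1 / m) * cst m = 1 := by
  funext t x; simp [cst, hm]

theorem dx_U (h : StepOK a c m u) : dx (Up a c m u) = Mo a c m u (dx u) := by
  unfold Up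
  split_ifs with hm
  · subst hm
    rw [M_zero, dx_Sg h.ha h.hc h.adm.nice]
  · rw [dx_mul (Nice.cst _) (logF_nice h.SW h.SW_ge), dx_cst, dx_eq (logF_hdx h.SW h.SW_ge),
      dx_Sg h.ha h.hc h.W, dx_Wt h.adm, mul_assoc (cst m), Sg_smul, Mo]
    have : cst 0 = (0 : Fn) := rfl
    rw [this]
    linear_combination (Sg a c (dx u * Wt m u) * invF (Sg a c (Wt m u))) * cst_inv_mul hm

theorem dt_U (h : StepOK a c m u) :
    dt (Up a c m u) = Mo a c m u (dt u) + cst c * (tt * Mo a c m u (Hf m u)) := by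
  have hx := h.adm.nice.dx
  have c0 : cst 0 = (0 : Fn) := rfl
  unfold Up
  split_ifs with hm
  · subst hm
    rw [M_zero, M_zero, dt_Sg h.ha h.hc h.adm.nice, Hf, c0, zero_mul, add_zero]
    ring
  · have e4 : dx (dx (Wt m u)) = cst m * (Hf m u * Wt m u) := by
      rw [dx_Wt h.adm, dx_mul ((Nice.cst m).mul hx) h.W, dx_mul (Nice.cst m) hx, dx_Wt h.adm,
        dx_cst, Hf, c0]
      ring
    rw [dt_mul (Nice.cst _) (logF_nice h.SW h.SW_ge), dt_cst, dt_eq (logF_hdt h.SW h.SW_ge),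
      dt_Sg h.ha h.hc h.W, dt_Wt h.adm, mul_assoc (cst m), Sg_smul, e4, Sg_smul, Mo, Mo, c0]
    linear_combination (Sg a c (dt u * Wt m u) * invF (Sg a c (Wt m u)) +
      cst c * tt * Sg a c (Hf m u * Wt m u) * invF (Sg a c (Wt m u))) * cst_inv_mul hm

theorem U_adm (h : StepOK a c m u) : Adm (Up a c m u) := by
  refine ⟨h.U_nice, fun t x => ?_, fun t x => ?_⟩
  · unfold Up
    split_ifs with hm
    · have := Sg_mono h.ha h.hc (Base.cst 0) h.adm.nice.base (t := t)
        (fun x => h.adm.nonneg t x) x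
      rwa [Sg_cst] at this
    · exact mul_nonneg (one_div_nonneg.2 h.hm) (Real.log_nonneg (h.SW_ge t x))
  · rw [h.dx_U]
    exact h.M_abs h.adm.nice.dx (fun y => h.adm.lip t y) x

end StepOK
end PS

namespace PS

/-- polynomial in `tanh x`, as a function of `(t,x)` -/
def polT (P : Polynomial ℝ) : Fn := fun _ x => P.eval (Real.tanh x)

theorem hasDerivAt_tanhR (x : ℝ) : HasDerivAt Real.tanh (1 - Real.tanh x ^ 2) x := by
  have hc : Real.cosh x ≠ 0 := (Real.cosh_pos x).ne'
  have h := (Real.hasDerivAt_sinh x).fun_div (Real.hasDerivAt_cosh x) hc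
  have e : Real.tanh = fun y => Real.sinh y / Real.cosh y := by
    funext y; exact Real.tanh_eq_sinh_div_cosh y
  rw [e]
  refine h.congr_deriv ?_
  simp only
  field_simp

theorem polT_hdx (P : Polynomial ℝ) (t x : ℝ) :
    HasDerivAt (fun y => polT P t y)
      (polT (Polynomial.derivative P * (1 - Polynomial.X ^ 2)) t x) x := by
  have := (P.hasDerivAt (Real.tanh x)).comp x (hasDerivAt_tanhR x)
  refine this.congr_deriv ?_
  simp [polT]

theorem polT_bdd (P : Polynomial ℝ) : ∃ C, ∀ t x, |polT P t x| ≤ C := by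
  obtain ⟨C, hC⟩ := (isCompact_Icc (a := (-1 : ℝ)) (b := 1)).exists_bound_of_continuousOn
    (f := fun y => P.eval y) P.continuous.continuousOn
  refine ⟨C, fun t x => hC _ ?_⟩
  exact abs_le.1 (Real.abs_tanh_lt_one x).le

theorem polT_nice (P : Polynomial ℝ) : Nice (polT P) := by
  have hb : ∀ P, Base (polT P) := fun P => by
    obtain ⟨C, hC⟩ := polT_bdd P
    refine ⟨?_, Growth.of_bdd C hC⟩
    have h1 : Continuous Real.tanh :=
      continuous_iff_continuousAt.2 fun x => (hasDerivAt_tanhR x).continuousAt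
    exact P.continuous.comp (h1.comp continuous_snd)
  intro n
  induction n generalizing P with
  | zero => exact hb P
  | succ n ih =>
    exact NiceN.mk' (hb P) (polT_hdx P) (gt := cst 0) (fun t x => hasDerivAt_const t _) (ih _)
      (NiceN.cst 0)

theorem dx_polT (P : Polynomial ℝ) :
    dx (polT P) = polT (Polynomial.derivative P * (1 - Polynomial.X ^ 2)) := dx_eq (polT_hdx P)

def lc : Fn := fun _ x => Real.log (Real.cosh x)

theorem lc_hdx (t x : ℝ) : HasDerivAt (fun y => lc t y) (polT Polynomial.X t x) x := by
  refine ((Real.hasDerivAt_cosh x).log (Real.cosh_pos x).ne').congr_deriv ?_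
  simp [polT, Real.tanh_eq_sinh_div_cosh]

theorem lc_nonneg (t x : ℝ) : 0 ≤ lc t x := Real.log_nonneg (Real.one_le_cosh x)

theorem lc_le (t x : ℝ) : lc t x ≤ |x| := by
  unfold lc
  rw [Real.log_le_iff_le_exp (Real.cosh_pos x), ← Real.cosh_abs, Real.cosh_eq]
  have : exp (-|x|) ≤ exp |x| := by gcongr; linarith [abs_nonneg x]
  linarith

theorem lc_nice : Nice lc := by
  have hb : Base lc := by
    constructor
    · have h1 : Continuous (lc 0) :=
        continuous_iff_continuousAt.2 fun x => (lc_hdx 0 x).continuousAt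
      exact h1.comp continuous_snd
    · intro T
      refine ⟨1, 1, by norm_num, by norm_num, fun t x _ => ?_⟩
      rw [abs_of_nonneg (lc_nonneg t x), one_mul, one_mul]
      linarith [lc_le t x, Real.add_one_le_exp |x|]
  intro n
  cases n with
  | zero => exact hb
  | succ n =>
    exact NiceN.mk' hb lc_hdx (gt := cst 0) (fun t x => hasDerivAt_const t _) (polT_nice _ n)
      (NiceN.cst 0)

theorem dx_lc : dx lc = polT Polynomial.X := dx_eq lc_hdx
theorem dt_lc : dt lc = cst 0 := dt_eq fun t x => hasDerivAt_const t _

theorem lc_adm : Adm lc := ⟨lc_nice, lc_nonneg, fun t x => by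
  rw [dx_lc]; simpa [polT] using (Real.abs_tanh_lt_one x).le⟩

/-- parameters of a recursion -/
structure Chain (Cm : ℝ) where
  m : ℕ → ℝ
  a : ℕ → ℝ
  c : ℕ → ℝ
  m0 : ∀ i, 0 ≤ m i
  m1 : ∀ i, m i ≤ 1
  a0 : ∀ i, 0 ≤ a i
  c0 : ∀ i, 0 ≤ c i
  cs : ∀ n, ∑ i ∈ Finset.range n, c i ≤ Cm

variable {Cm B : ℝ}

def Chain.u (ch : Chain Cm) : ℕ → Fn
  | 0 => lc
  | i + 1 => Up (ch.a i) (ch.c i) (ch.m i) (ch.u i)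

theorem Chain.adm (ch : Chain Cm) (i : ℕ) : Adm (ch.u i) := by
  induction i with
  | zero => exact lc_adm
  | succ i ih => exact StepOK.U_adm ⟨ch.a0 i, ch.c0 i, ch.m0 i, ih⟩

theorem Chain.ok (ch : Chain Cm) (i : ℕ) : StepOK (ch.a i) (ch.c i) (ch.m i) (ch.u i) :=
  ⟨ch.a0 i, ch.c0 i, ch.m0 i, ch.adm i⟩

theorem Chain.c_le (ch : Chain Cm) (i : ℕ) : ch.c i ≤ Cm := by
  refine le_trans ?_ (ch.cs (i + 1))
  rw [Finset.sum_range_succ]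
  linarith [Finset.sum_nonneg (s := Finset.range i) (fun j _ => ch.c0 j)]

abbrev Proc (Cm : ℝ) := Chain Cm → ℕ → Fn

def NiceP (f : Proc Cm) : Prop := ∀ ch i, Nice (f ch i)
def dxP (f : Proc Cm) : Proc Cm := fun ch i => dx (f ch i)
def MP (f : Proc Cm) : Proc Cm := fun ch i => Mo (ch.a i) (ch.c i) (ch.m i) (ch.u i) (f ch i)
def errP (f : Proc Cm) : Proc Cm := fun ch i => f ch (i + 1) - MP f ch i
def uP : Proc Cm := fun ch i => ch.u i
def uX : Proc Cm := dxP uP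
def mP : Proc Cm := fun ch i => cst (ch.m i)
def cP : Proc Cm := fun ch i => cst (ch.c i)
def ttP : Proc Cm := fun _ _ => tt
def cov (f g : Proc Cm) : Proc Cm := MP (f * g) - MP f * MP g
def cc (d : ℝ) : Proc Cm := fun _ _ => cst d

theorem NiceP.add {f g : Proc Cm} (hf : NiceP f) (hg : NiceP g) : NiceP (f + g) :=
  fun ch i => (hf ch i).add (hg ch i)
theorem NiceP.sub {f g : Proc Cm} (hf : NiceP f) (hg : NiceP g) : NiceP (f - g) :=
  fun ch i => (hf ch i).sub (hg ch i)
theorem NiceP.mul {f g : Proc Cm} (hf : NiceP f) (hg : NiceP g) : NiceP (f * g) :=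
  fun ch i => (hf ch i).mul (hg ch i)
theorem NiceP.dxP {f : Proc Cm} (hf : NiceP f) : NiceP (dxP f) := fun ch i => (hf ch i).dx
theorem NiceP.MP {f : Proc Cm} (hf : NiceP f) : NiceP (MP f) :=
  fun ch i => (ch.ok i).M_nice (hf ch i)
theorem NiceP.errP {f : Proc Cm} (hf : NiceP f) : NiceP (errP f) :=
  fun ch i => (hf ch (i + 1)).sub (hf.MP ch i)
theorem NiceP.cov {f g : Proc Cm} (hf : NiceP f) (hg : NiceP g) : NiceP (cov f g) :=
  (hf.mul hg).MP.sub (hf.MP.mul hg.MP)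
theorem nice_uP : NiceP (uP (Cm := Cm)) := fun ch i => (ch.adm i).nice
theorem nice_uX : NiceP (uX (Cm := Cm)) := nice_uP.dxP
theorem nice_mP : NiceP (mP (Cm := Cm)) := fun _ _ => Nice.cst _
theorem nice_cP : NiceP (cP (Cm := Cm)) := fun _ _ => Nice.cst _
theorem nice_ttP : NiceP (ttP (Cm := Cm)) := fun _ _ => Nice.tt
theorem nice_cc (d : ℝ) : NiceP (cc (Cm := Cm) d) := fun _ _ => Nice.cst _

theorem MP_add {f g : Proc Cm} (hf : NiceP f) (hg : NiceP g) : MP (f + g) = MP f + MP g := by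
  funext ch i; exact (ch.ok i).M_add (hf ch i) (hg ch i)
theorem dxP_add {f g : Proc Cm} (hf : NiceP f) (hg : NiceP g) : dxP (f + g) = dxP f + dxP g := by
  funext ch i; exact dx_add (hf ch i) (hg ch i)
theorem dxP_sub {f g : Proc Cm} (hf : NiceP f) (hg : NiceP g) : dxP (f - g) = dxP f - dxP g := by
  funext ch i; exact dx_sub (hf ch i) (hg ch i)
theorem dxP_mul {f g : Proc Cm} (hf : NiceP f) (hg : NiceP g) :
    dxP (f * g) = dxP f * g + f * dxP g := by
  funext ch i; exact dx_mul (hf ch i) (hg ch i)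
theorem dxP_cc (d : ℝ) : dxP (cc (Cm := Cm) d) = cc 0 := by
  funext ch i; exact dx_cst _
theorem dxP_mP : dxP (mP (Cm := Cm)) = cc 0 := by
  funext ch i; exact dx_cst _
theorem dxP_cP : dxP (cP (Cm := Cm)) = cc 0 := by
  funext ch i; exact dx_cst _
theorem dxP_ttP : dxP (ttP (Cm := Cm)) = cc 0 := by
  funext ch i; exact dx_tt
theorem cc_zero : cc (Cm := Cm) 0 = 0 := rfl

theorem dxP_MP {f : Proc Cm} (hf : NiceP f) : dxP (MP f) = MP (dxP f) + mP * cov f uX := by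
  funext ch i; exact (ch.ok i).dx_M (hf ch i)

theorem errP_dxP {f : Proc Cm} (hf : NiceP f) : errP (dxP f) = dxP (errP f) + mP * cov f uX := by
  funext ch i
  have h1 : dxP (errP f) ch i = dx (f ch (i + 1)) - dxP (MP f) ch i :=
    dx_sub (hf ch (i + 1)) (hf.MP ch i)
  have h2 : errP (dxP f) ch i = dx (f ch (i + 1)) - MP (dxP f) ch i := rfl
  rw [Pi.add_apply, Pi.add_apply, h1, h2, dxP_MP hf, Pi.add_apply, Pi.add_apply]
  ring

theorem dxP_cov {f g : Proc Cm} (hf : NiceP f) (hg : NiceP g) :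
    dxP (cov f g) = cov (dxP f) g + cov f (dxP g) +
      mP * (cov (f * g) uX - MP g * cov f uX - MP f * cov g uX) := by
  have e : cov f g = MP (f * g) - MP f * MP g := rfl
  have e1 : cov (dxP f) g = MP (dxP f * g) - MP (dxP f) * MP g := rfl
  have e2 : cov f (dxP g) = MP (f * dxP g) - MP f * MP (dxP g) := rfl
  rw [e, dxP_sub (hf.mul hg).MP (hf.MP.mul hg.MP), dxP_MP (hf.mul hg), dxP_mul hf.MP hg.MP,
    dxP_MP hf, dxP_MP hg, dxP_mul hf hg, MP_add (hf.dxP.mul hg) (hf.mul hg.dxP), e1, e2]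
  ring

end PS

namespace PS
variable {Cm B : ℝ}

/-- uniformly bounded process -/
def Bdd (B : ℝ) (f : Proc Cm) : Prop :=
  NiceP f ∧ ∃ K : ℝ, 0 ≤ K ∧ ∀ ch i t x, |t| ≤ B → |f ch i t x| ≤ K

/-- process with uniformly bounded accumulated size -/
def Small (B : ℝ) (e : Proc Cm) : Prop :=
  NiceP e ∧ ∃ K : ℝ, 0 ≤ K ∧ ∃ Q : Proc Cm, NiceP Q ∧
    (∀ ch i t x, |t| ≤ B → 0 ≤ Q ch i t x ∧ Q ch i t x ≤ K) ∧
    ∀ ch i t x, |t| ≤ B → Q ch (i + 1) t x + |e ch i t x| ≤ MP Q ch i t x + K * ch.c i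

def Good (B : ℝ) (f : Proc Cm) : Prop := Bdd B f ∧ Small B (errP f)

theorem Bdd.add {f g : Proc Cm} (hf : Bdd B f) (hg : Bdd B g) : Bdd B (f + g) := by
  obtain ⟨nf, F, F0, hF⟩ := hf
  obtain ⟨ng, G, G0, hG⟩ := hg
  refine ⟨nf.add ng, F + G, by positivity, fun ch i t x ht => ?_⟩
  exact (abs_add_le _ _).trans (add_le_add (hF ch i t x ht) (hG ch i t x ht))

theorem Bdd.mul {f g : Proc Cm} (hf : Bdd B f) (hg : Bdd B g) : Bdd B (f * g) := by
  obtain ⟨nf, F, F0, hF⟩ := hf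
  obtain ⟨ng, G, G0, hG⟩ := hg
  refine ⟨nf.mul ng, F * G, by positivity, fun ch i t x ht => ?_⟩
  have e : (f * g) ch i t x = f ch i t x * g ch i t x := rfl
  rw [e, abs_mul]
  exact mul_le_mul (hF ch i t x ht) (hG ch i t x ht) (abs_nonneg _) F0

theorem Bdd.cc (d : ℝ) : Bdd B (cc (Cm := Cm) d) :=
  ⟨nice_cc d, |d|, abs_nonneg _, fun _ _ _ _ _ => le_rfl⟩
theorem Bdd.mP : Bdd B (mP (Cm := Cm)) :=
  ⟨nice_mP, 1, zero_le_one, fun ch i _ _ _ => abs_le.2 ⟨(by norm_num : (-1:ℝ) ≤ 0).trans (ch.m0 i), ch.m1 i⟩⟩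
theorem Bdd.cP (hC : 0 ≤ Cm) : Bdd B (cP (Cm := Cm)) :=
  ⟨nice_cP, Cm, hC, fun ch i _ _ _ => abs_le.2 ⟨(neg_nonpos.2 hC).trans (ch.c0 i), ch.c_le i⟩⟩
theorem Bdd.ttP (hB : 0 ≤ B) : Bdd B (ttP (Cm := Cm)) :=
  ⟨nice_ttP, B, hB, fun _ _ _ _ ht => ht⟩

theorem procneg (f : Proc Cm) : -f = PS.cc (-1) * f := by
  funext ch i; exact neg_eq _
theorem Bdd.neg {f : Proc Cm} (hf : Bdd B f) : Bdd B (-f) := by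
  rw [procneg]; exact (Bdd.cc _).mul hf
theorem Bdd.sub {f g : Proc Cm} (hf : Bdd B f) (hg : Bdd B g) : Bdd B (f - g) := by
  rw [sub_eq_add_neg]; exact hf.add hg.neg
theorem Bdd.MP {f : Proc Cm} (hf : Bdd B f) : Bdd B (MP f) := by
  obtain ⟨nf, F, F0, hF⟩ := hf
  exact ⟨nf.MP, F, F0, fun ch i t x ht => (ch.ok i).M_abs (nf ch i) (fun y => hF ch i t y ht) x⟩

theorem Small.add {f g : Proc Cm} (hf : Small B f) (hg : Small B g) : Small B (f + g) := by
  obtain ⟨nf, F, F0, Q, nQ, hQ, hF⟩ := hf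
  obtain ⟨ng, G, G0, R, nR, hR, hG⟩ := hg
  refine ⟨nf.add ng, F + G, by positivity, Q + R, nQ.add nR, fun ch i t x ht => ?_,
    fun ch i t x ht => ?_⟩
  · have h1 := hQ ch i t x ht
    have h2 := hR ch i t x ht
    have e : (Q + R) ch i t x = Q ch i t x + R ch i t x := rfl
    rw [e]
    constructor <;> linarith
  · have h1 := hF ch i t x ht
    have h2 := hG ch i t x ht
    have e : (Q + R) ch (i + 1) t x = Q ch (i + 1) t x + R ch (i + 1) t x := rfl
    have e2 : (f + g) ch i t x = f ch i t x + g ch i t x := rfl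
    have e3 : (MP Q + MP R) ch i t x = MP Q ch i t x + MP R ch i t x := rfl
    rw [e, e2, MP_add nQ nR, e3]
    linarith [abs_add_le (f ch i t x) (g ch i t x)]

theorem Small.bmul {b f : Proc Cm} (hb : Bdd B b) (hf : Small B f) : Small B (b * f) := by
  obtain ⟨nb, D, D0, hD⟩ := hb
  obtain ⟨nf, F, F0, Q, nQ, hQ, hF⟩ := hf
  refine ⟨nb.mul nf, D * F, by positivity, PS.cc D * Q, (nice_cc D).mul nQ,
    fun ch i t x ht => ?_, fun ch i t x ht => ?_⟩
  · have h1 := hQ ch i t x ht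
    have e : (PS.cc D * Q : Proc Cm) ch i t x = D * Q ch i t x := rfl
    rw [e]
    exact ⟨mul_nonneg D0 h1.1, mul_le_mul_of_nonneg_left h1.2 D0⟩
  · have h1 := mul_le_mul_of_nonneg_left (hF ch i t x ht) D0
    have h2 := mul_le_mul_of_nonneg_right (hD ch i t x ht) (abs_nonneg (f ch i t x))
    have e : (PS.cc D * Q : Proc Cm) ch (i + 1) t x = D * Q ch (i + 1) t x := rfl
    have e2 : (b * f) ch i t x = b ch i t x * f ch i t x := rfl
    have e3 : MP (PS.cc D * Q : Proc Cm) ch i t x = D * MP Q ch i t x :=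
      congrFun (congrFun (StepOK.M_smul D (Q ch i)) t) x
    rw [e, e2, e3, abs_mul]
    linarith

theorem Small.neg {f : Proc Cm} (hf : Small B f) : Small B (-f) := by
  rw [procneg]; exact Small.bmul (Bdd.cc _) hf
theorem Small.sub {f g : Proc Cm} (hf : Small B f) (hg : Small B g) : Small B (f - g) := by
  rw [sub_eq_add_neg]; exact hf.add hg.neg

theorem nice_zero : NiceP (0 : Proc Cm) := fun _ _ => Nice.cst 0
theorem MP_zero : MP (0 : Proc Cm) = 0 := by
  funext ch i; exact (ch.ok i).M_cst 0

theorem Small.cmul {b : Proc Cm} (hb : Bdd B b) : Small B (cP * b) := by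
  obtain ⟨nb, D, D0, hD⟩ := hb
  refine ⟨nice_cP.mul nb, D, D0, 0, nice_zero, fun ch i t x ht => ⟨le_rfl, D0⟩,
    fun ch i t x ht => ?_⟩
  have e : (cP * b : Proc Cm) ch i t x = ch.c i * b ch i t x := rfl
  rw [e, MP_zero, abs_mul, abs_of_nonneg (ch.c0 i)]
  have := mul_le_mul_of_nonneg_left (hD ch i t x ht) (ch.c0 i)
  simp only [Pi.zero_apply]
  linarith

theorem Small.zero : Small B (0 : Proc Cm) := by
  have := Small.cmul (B := B) (Bdd.cc (Cm := Cm) 0)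
  rwa [cc_zero, mul_zero] at this

/-- boundedness from small error -/
theorem lemA {f : Proc Cm} (nf : NiceP f) (h0 : ∃ F, ∀ ch t x, |t| ≤ B → |f ch 0 t x| ≤ F)
    (hC : 0 ≤ Cm) (he : Small B (errP f)) : Good B f := by
  refine ⟨⟨nf, ?_⟩, he⟩
  obtain ⟨F, hF⟩ := h0
  obtain ⟨ne, K, K0, Q, nQ, hQ, hK⟩ := he
  have key : ∀ (ch : Chain Cm) (i : ℕ) t, |t| ≤ B → ∀ x,
      f ch i t x + Q ch i t x ≤ |F| + K + K * ∑ j ∈ Finset.range i, ch.c j ∧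
      -f ch i t x + Q ch i t x ≤ |F| + K + K * ∑ j ∈ Finset.range i, ch.c j := by
    intro ch i t ht
    induction i with
    | zero =>
      intro x
      have h1 := hQ ch 0 t x ht
      have h2 := abs_le.1 (hF ch t x ht)
      have h3 := le_abs_self F
      simp only [Finset.range_zero, Finset.sum_empty, mul_zero]
      constructor <;> linarith
    | succ i ih =>
      intro x
      have h1 := hK ch i t x ht
      have e : errP f ch i t x = f ch (i + 1) t x - MP f ch i t x := rfl
      have h2 := le_abs_self (errP f ch i t x)
      have h3 := neg_abs_le (errP f ch i t x)
      have p1 := (ch.ok i).M_le ((nf ch i).add (nQ ch i)) (t := t) (fun y => (ih y).1) x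
      have p2 := (ch.ok i).M_le ((nf ch i).neg.add (nQ ch i)) (t := t) (fun y => (ih y).2) x
      rw [(ch.ok i).M_add (nf ch i) (nQ ch i)] at p1
      rw [(ch.ok i).M_add (nf ch i).neg (nQ ch i), StepOK.M_neg] at p2
      have p1' : MP f ch i t x + MP Q ch i t x ≤
        |F| + K + K * ∑ j ∈ Finset.range i, ch.c j := p1
      have p2' : -MP f ch i t x + MP Q ch i t x ≤
        |F| + K + K * ∑ j ∈ Finset.range i, ch.c j := p2
      rw [Finset.sum_range_succ, mul_add]
      constructor <;> linarith
  refine ⟨|F| + K + K * Cm, by positivity, fun ch i t x ht => ?_⟩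
  have h1 := key ch i t ht x
  have h2 := (hQ ch i t x ht).1
  have h3 := mul_le_mul_of_nonneg_left (ch.cs i) K0
  exact abs_le.2 ⟨by linarith, by linarith⟩

theorem lemB {f : Proc Cm} (hf : Good B f) : Small B (cov f f) := by
  obtain ⟨⟨nf, F, F0, hF⟩, ne, K, K0, Q, nQ, hQ, hK⟩ := hf
  refine ⟨nf.cov nf, F * F + 2 * F * K, by positivity, f * f + PS.cc (2 * F) * Q,
    (nf.mul nf).add ((nice_cc _).mul nQ), fun ch i t x ht => ?_, fun ch i t x ht => ?_⟩
  · have h1 := hQ ch i t x ht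
    have h2 := hF ch i t x ht
    have e : (f * f + PS.cc (2 * F) * Q : Proc Cm) ch i t x =
      f ch i t x * f ch i t x + 2 * F * Q ch i t x := rfl
    rw [e]
    have h3 := mul_nonneg F0 h1.1
    have h4 := mul_le_mul_of_nonneg_left h1.2 F0
    have h5 := mul_self_nonneg (f ch i t x)
    have h6 := abs_le_iff_mul_self_le.1 (h2.trans (le_abs_self F))
    constructor <;> nlinarith
  · have e : (f * f + PS.cc (2 * F) * Q : Proc Cm) ch (i + 1) t x =
      f ch (i + 1) t x * f ch (i + 1) t x + 2 * F * Q ch (i + 1) t x := rfl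
    have e3 : MP (PS.cc (2 * F) * Q) ch i t x = 2 * F * MP Q ch i t x :=
      congrFun (congrFun (StepOK.M_smul (2 * F) (Q ch i)) t) x
    have e4 : (MP (f * f) + MP (PS.cc (2 * F) * Q) : Proc Cm) ch i t x =
      MP (f * f) ch i t x + MP (PS.cc (2 * F) * Q) ch i t x := rfl
    have e5 : cov f f ch i t x = MP (f * f) ch i t x - MP f ch i t x * MP f ch i t x := rfl
    rw [e, MP_add (nf.mul nf) ((nice_cc _).mul nQ), e4, e3]
    have pos : 0 ≤ cov f f ch i t x := by
      have ok := ch.ok i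
      set d := MP f ch i t x with hd
      have n1 : Nice (cst (-(2 * d)) * f ch i + cst (d * d)) :=
        ((Nice.cst _).mul (nf ch i)).add (Nice.cst _)
      have h := ok.le_M (f := f ch i * f ch i + (cst (-(2 * d)) * f ch i + cst (d * d)))
        (((nf ch i).mul (nf ch i)).add n1) (t := t) (d := 0) (fun y => by
          have : (f ch i * f ch i + (cst (-(2 * d)) * f ch i + cst (d * d))) t y =
            (f ch i t y - d) ^ 2 := by
            simp only [Pi.add_apply, Pi.mul_apply, cst]; ring
          rw [this]; positivity) x
      rw [ok.M_add ((nf ch i).mul (nf ch i)) n1, ok.M_add ((Nice.cst _).mul (nf ch i)) (Nice.cst _),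
        StepOK.M_smul, ok.M_cst] at h
      have h' : 0 ≤ MP (f * f) ch i t x + (-(2 * d) * d + d * d) := h
      rw [e5]; linarith
    rw [abs_of_nonneg pos, e5]
    have h1 := hK ch i t x ht
    have h2 := abs_le.1 (hF ch (i + 1) t x ht)
    have h3 := abs_le.1 ((ch.ok i).M_abs (nf ch i) (t := t) (fun y => hF ch i t y ht) x)
    have h3' : -F ≤ MP f ch i t x ∧ MP f ch i t x ≤ F := h3
    have e6 : errP f ch i t x = f ch (i + 1) t x - MP f ch i t x := rfl
    have h4 : f ch (i + 1) t x * f ch (i + 1) t x - MP f ch i t x * MP f ch i t x ≤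
        2 * F * |errP f ch i t x| := by
      have : f ch (i + 1) t x * f ch (i + 1) t x - MP f ch i t x * MP f ch i t x =
        (f ch (i + 1) t x + MP f ch i t x) * errP f ch i t x := by rw [e6]; ring
      rw [this]
      refine (le_abs_self _).trans ?_
      rw [abs_mul]
      refine mul_le_mul_of_nonneg_right (abs_le.2 ⟨?_, ?_⟩) (abs_nonneg _) <;> linarith
    have h5 := mul_le_mul_of_nonneg_left h1 F0
    have h6 := mul_nonneg (mul_nonneg F0 F0) (ch.c0 i)
    linarith

theorem errP_add {f g : Proc Cm} (hf : NiceP f) (hg : NiceP g) :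
    errP (f + g) = errP f + errP g := by
  funext ch i
  have : errP (f + g) ch i = f ch (i + 1) + g ch (i + 1) - MP (f + g) ch i := rfl
  rw [this, MP_add hf hg]
  have h2 : (errP f + errP g) ch i = (f ch (i + 1) - MP f ch i) + (g ch (i + 1) - MP g ch i) := rfl
  have h3 : (MP f + MP g) ch i = MP f ch i + MP g ch i := rfl
  rw [h2, h3]; ring

theorem Good.add {f g : Proc Cm} (hf : Good B f) (hg : Good B g) : Good B (f + g) :=
  ⟨hf.1.add hg.1, by rw [errP_add hf.1.1 hg.1.1]; exact hf.2.add hg.2⟩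

theorem cov_pol {f g : Proc Cm} (hf : NiceP f) (hg : NiceP g) :
    cov f g = PS.cc (1 / 2) * (cov (f + g) (f + g) - cov f f - cov g g) := by
  have e1 : MP ((f + g) * (f + g)) = MP (f * f) + (MP (f * g) + MP (f * g)) + MP (g * g) := by
    rw [← MP_add (hf.mul hg) (hf.mul hg), ← MP_add (hf.mul hf) ((hf.mul hg).add (hf.mul hg)),
      ← MP_add ((hf.mul hf).add ((hf.mul hg).add (hf.mul hg))) (hg.mul hg)]
    congr 1; ring
  have e2 : (PS.cc (1 / 2) : Proc Cm) * 2 = 1 := by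
    funext ch i t x
    change (1 / 2 : ℝ) * 2 = 1
    norm_num
  unfold cov
  rw [e1, MP_add hf hg]
  linear_combination (-(MP (f * g) - MP f * MP g)) * e2

theorem covS {f g : Proc Cm} (hf : Good B f) (hg : Good B g) : Small B (cov f g) := by
  rw [cov_pol hf.1.1 hg.1.1]
  exact Small.bmul (Bdd.cc _) (((lemB (hf.add hg)).sub (lemB hf)).sub (lemB hg))

theorem Bdd.shift {f : Proc Cm} (hf : Bdd B f) : Bdd B (fun ch i => f ch (i + 1)) := by
  obtain ⟨nf, F, F0, hF⟩ := hf
  exact ⟨fun ch i => nf ch (i + 1), F, F0, fun ch i t x ht => hF ch (i + 1) t x ht⟩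

theorem Good.mul {f g : Proc Cm} (hf : Good B f) (hg : Good B g) : Good B (f * g) := by
  refine ⟨hf.1.mul hg.1, ?_⟩
  have e : errP (f * g) = (fun ch i => g ch (i + 1)) * errP f + MP f * errP g - cov f g := by
    funext ch i
    change f ch (i + 1) * g ch (i + 1) - MP (f * g) ch i =
      g ch (i + 1) * (f ch (i + 1) - MP f ch i) + MP f ch i * (g ch (i + 1) - MP g ch i) -
      (MP (f * g) ch i - MP f ch i * MP g ch i)
    ring
  rw [e]
  exact ((Small.bmul hg.1.shift hf.2).add (Small.bmul hf.1.MP hg.2)).sub (covS hf hg)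

end PS

namespace PS
variable {Cm B : ℝ}

/-- `P` holds for `f` and its first `n` space derivatives -/
def AllN (P : Proc Cm → Prop) : ℕ → Proc Cm → Prop
  | 0, f => P f
  | n + 1, f => P f ∧ AllN P n (dxP f)

theorem AllN.head {P : Proc Cm → Prop} {n : ℕ} {f : Proc Cm} (h : AllN P n f) : P f := by
  cases n with
  | zero => exact h
  | succ n => exact h.1

theorem AllN.mono1 {P : Proc Cm → Prop} {n : ℕ} : ∀ {f : Proc Cm}, AllN P (n + 1) f → AllN P n f := by
  induction n with
  | zero => intro f h; exact h.1
  | succ n ih => intro f h; exact ⟨h.1, ih h.2⟩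

theorem AllN.imp {P R : Proc Cm → Prop} (hPR : ∀ f, P f → R f) {n : ℕ} :
    ∀ {f : Proc Cm}, AllN P n f → AllN R n f := by
  induction n with
  | zero => intro f h; exact hPR _ h
  | succ n ih => intro f h; exact ⟨hPR _ h.1, ih h.2⟩

/-- sums -/
theorem AllN.add {P : Proc Cm → Prop} (hn : ∀ f, P f → NiceP f)
    (hP : ∀ f g, P f → P g → P (f + g)) {n : ℕ} :
    ∀ {f g : Proc Cm}, AllN P n f → AllN P n g → AllN P n (f + g) := by
  induction n with
  | zero => intro f g hf hg; exact hP _ _ hf hg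
  | succ n ih =>
    intro f g hf hg
    refine ⟨hP _ _ hf.1 hg.1, ?_⟩
    rw [dxP_add (hn _ hf.1) (hn _ hg.1)]
    exact ih hf.2 hg.2

/-- products -/
theorem AllN.mul {P R : Proc Cm → Prop} (hp : ∀ f, P f → NiceP f) (hr : ∀ f, R f → NiceP f)
    (hP : ∀ f g, R f → R g → R (f + g)) (hM : ∀ f g, P f → R g → R (f * g)) {n : ℕ} :
    ∀ {f g : Proc Cm}, AllN P n f → AllN R n g → AllN R n (f * g) := by
  induction n with
  | zero => intro f g hf hg; exact hM _ _ hf hg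
  | succ n ih =>
    intro f g hf hg
    refine ⟨hM _ _ hf.1 hg.1, ?_⟩
    rw [dxP_mul (hp _ hf.1) (hr _ hg.1)]
    exact AllN.add hr hP (ih hf.2 hg.mono1) (ih hf.mono1 hg.2)

abbrev BddN (B : ℝ) (n : ℕ) (f : Proc Cm) := AllN (Bdd B) n f
abbrev SmallN (B : ℝ) (n : ℕ) (f : Proc Cm) := AllN (Small B) n f
abbrev GoodN (B : ℝ) (n : ℕ) (f : Proc Cm) := AllN (Good B) n f

theorem BddN.add {n : ℕ} {f g : Proc Cm} (hf : BddN B n f) (hg : BddN B n g) :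
    BddN B n (f + g) := AllN.add (fun _ h => h.1) (fun _ _ => Bdd.add) hf hg
theorem SmallN.add {n : ℕ} {f g : Proc Cm} (hf : SmallN B n f) (hg : SmallN B n g) :
    SmallN B n (f + g) := AllN.add (fun _ h => h.1) (fun _ _ => Small.add) hf hg
theorem GoodN.add {n : ℕ} {f g : Proc Cm} (hf : GoodN B n f) (hg : GoodN B n g) :
    GoodN B n (f + g) := AllN.add (fun _ h => h.1.1) (fun _ _ => Good.add) hf hg
theorem BddN.mul {n : ℕ} {f g : Proc Cm} (hf : BddN B n f) (hg : BddN B n g) :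
    BddN B n (f * g) :=
  AllN.mul (fun _ h => h.1) (fun _ h => h.1) (fun _ _ => Bdd.add) (fun _ _ => Bdd.mul) hf hg
theorem GoodN.mul {n : ℕ} {f g : Proc Cm} (hf : GoodN B n f) (hg : GoodN B n g) :
    GoodN B n (f * g) :=
  AllN.mul (fun _ h => h.1.1) (fun _ h => h.1.1) (fun _ _ => Good.add) (fun _ _ => Good.mul) hf hg
theorem SmallN.bmul {n : ℕ} {f g : Proc Cm} (hf : BddN B n f) (hg : SmallN B n g) :
    SmallN B n (f * g) :=
  AllN.mul (fun _ h => h.1) (fun _ h => h.1) (fun _ _ => Small.add) (fun _ _ => Small.bmul) hf hg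
theorem GoodN.bdd {n : ℕ} {f : Proc Cm} (hf : GoodN B n f) : BddN B n f :=
  AllN.imp (fun _ h => h.1) hf

theorem BddN.cc {n : ℕ} : ∀ d, BddN B n (cc (Cm := Cm) d) := by
  induction n with
  | zero => intro d; exact Bdd.cc d
  | succ n ih => intro d; exact ⟨Bdd.cc d, by rw [dxP_cc]; exact ih 0⟩
theorem BddN.of_const {n : ℕ} {f : Proc Cm} (hf : Bdd B f) (h : dxP f = PS.cc 0) :
    BddN B n f := by
  cases n with
  | zero => exact hf
  | succ n => exact ⟨hf, by rw [h]; exact BddN.cc 0⟩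
theorem BddN.mP {n : ℕ} : BddN B n (mP (Cm := Cm)) := BddN.of_const Bdd.mP dxP_mP
theorem BddN.ttP {n : ℕ} (hB : 0 ≤ B) : BddN B n (ttP (Cm := Cm)) :=
  BddN.of_const (Bdd.ttP hB) dxP_ttP
theorem BddN.cP {n : ℕ} (hC : 0 ≤ Cm) : BddN B n (cP (Cm := Cm)) :=
  BddN.of_const (Bdd.cP hC) dxP_cP
theorem BddN.sub {n : ℕ} {f g : Proc Cm} (hf : BddN B n f) (hg : BddN B n g) :
    BddN B n (f - g) := by
  rw [sub_eq_add_neg, procneg]; exact hf.add ((BddN.cc _).mul hg)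
theorem SmallN.sub {n : ℕ} {f g : Proc Cm} (hf : SmallN B n f) (hg : SmallN B n g) :
    SmallN B n (f - g) := by
  rw [sub_eq_add_neg, procneg]; exact hf.add (SmallN.bmul (BddN.cc _) hg)
theorem SmallN.cmul {n : ℕ} : ∀ {b : Proc Cm}, BddN B n b → SmallN B n (cP * b) := by
  induction n with
  | zero => intro b hb; exact Small.cmul hb
  | succ n ih =>
    intro b hb
    refine ⟨Small.cmul hb.1, ?_⟩
    rw [dxP_mul nice_cP hb.1.1, dxP_cP, cc_zero, zero_mul, zero_add]
    exact ih hb.2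
theorem SmallN.zero {n : ℕ} : SmallN B n (0 : Proc Cm) := by
  have := SmallN.cmul (n := n) (BddN.cc (B := B) (Cm := Cm) 0)
  rwa [cc_zero, mul_zero] at this

theorem BddN.MP {n : ℕ} : ∀ {f : Proc Cm}, BddN B n (uX (Cm := Cm)) → BddN B n f →
    BddN B n (MP f) := by
  induction n with
  | zero => intro f _ hf; exact Bdd.MP hf
  | succ n ih =>
    intro f hu hf
    refine ⟨Bdd.MP hf.1, ?_⟩
    have hu' := hu.mono1
    have hf' := hf.mono1
    rw [dxP_MP hf.1.1]
    refine (ih hu' hf.2).add (BddN.mP.mul ?_)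
    exact (ih hu' (BddN.mul hf' hu')).sub ((ih hu' hf').mul (ih hu' hu'))

theorem BddN.cov {n : ℕ} {f g : Proc Cm} (hu : BddN B n (uX (Cm := Cm))) (hf : BddN B n f)
    (hg : BddN B n g) : BddN B n (cov f g) :=
  (BddN.MP hu (hf.mul hg)).sub ((BddN.MP hu hf).mul (BddN.MP hu hg))

theorem covSN {n : ℕ} : ∀ {f g : Proc Cm}, GoodN B n (uX (Cm := Cm)) → GoodN B n f → GoodN B n g →
    SmallN B n (cov f g) := by
  induction n with
  | zero => intro f g _ hf hg; exact covS hf hg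
  | succ n ih =>
    intro f g hu hf hg
    refine ⟨covS hf.1 hg.1, ?_⟩
    have hu' := hu.mono1
    have hf' := hf.mono1
    have hg' := hg.mono1
    rw [dxP_cov hf.1.1.1 hg.1.1.1]
    refine SmallN.add (SmallN.add (ih hu' hf.2 hg') (ih hu' hf' hg.2)) (SmallN.bmul BddN.mP ?_)
    exact SmallN.sub (SmallN.sub (ih hu' (GoodN.mul hf' hg') hu')
      (SmallN.bmul (BddN.MP (GoodN.bdd hu') (GoodN.bdd hg')) (ih hu' hf' hu')))
      (SmallN.bmul (BddN.MP (GoodN.bdd hu') (GoodN.bdd hf')) (ih hu' hg' hu'))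

def StartBdd (B : ℝ) (f : Proc Cm) : Prop := ∃ F, ∀ ch t x, |t| ≤ B → |f ch 0 t x| ≤ F

theorem goodN_of {n : ℕ} (hC : 0 ≤ Cm) : ∀ {f : Proc Cm},
    (∀ k, k < n → GoodN B k (uX (Cm := Cm))) → NiceP f →
    AllN (StartBdd B) n f → SmallN B n (errP f) → GoodN B n f := by
  induction n with
  | zero => intro f _ nf h0 he; exact lemA nf h0 hC he
  | succ n ih =>
    intro f hu nf h0 he
    have hu' : ∀ k, k < n → GoodN B k (uX (Cm := Cm)) := fun k hk => hu k (by omega)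
    have hf := ih hu' nf h0.mono1 he.mono1
    refine ⟨hf.head, ih hu' nf.dxP h0.2 ?_⟩
    rw [errP_dxP nf]
    exact SmallN.add he.2 (SmallN.bmul BddN.mP (covSN (hu n (by omega)) hf (hu n (by omega))))

theorem start_uX (n : ℕ) : AllN (StartBdd B) n (uX (Cm := Cm)) := by
  have key : ∀ n (f : Proc Cm) (P : Polynomial ℝ), (∀ ch, f ch 0 = polT P) → AllN (StartBdd B) n f := by
    intro n
    induction n with
    | zero =>
      intro f P h
      obtain ⟨C, hC⟩ := polT_bdd P
      exact ⟨C, fun ch t x _ => by rw [h]; exact hC t x⟩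
    | succ n ih =>
      intro f P h
      obtain ⟨C, hC⟩ := polT_bdd P
      refine ⟨⟨C, fun ch t x _ => by rw [h]; exact hC t x⟩, ?_⟩
      refine ih _ (Polynomial.derivative P * (1 - Polynomial.X ^ 2)) fun ch => ?_
      rw [← dx_polT, ← h ch]; rfl
  exact key n _ Polynomial.X fun ch => dx_lc

theorem start_zero (n : ℕ) : ∀ (f : Proc Cm), (∀ ch, f ch 0 = cst 0) → AllN (StartBdd B) n f := by
  induction n with
  | zero =>
    intro f h
    exact ⟨0, fun ch t x _ => by rw [h]; simp [cst]⟩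
  | succ n ih =>
    intro f h
    refine ⟨⟨0, fun ch t x _ => by rw [h]; simp [cst]⟩, ih _ fun ch => ?_⟩
    have : dxP f ch 0 = dx (f ch 0) := rfl
    rw [this, h, dx_cst]

theorem err_uX : errP (uX (Cm := Cm)) = 0 := by
  funext ch i
  have h := (ch.ok i).dx_U
  have : errP (uX (Cm := Cm)) ch i = dx (Up (ch.a i) (ch.c i) (ch.m i) (ch.u i)) -
    Mo (ch.a i) (ch.c i) (ch.m i) (ch.u i) (dx (ch.u i)) := rfl
  rw [this, h, sub_self]; rfl

theorem good_uX (hC : 0 ≤ Cm) (n : ℕ) : GoodN B n (uX (Cm := Cm)) := by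
  induction n using Nat.strong_induction_on with
  | _ n ih =>
    refine goodN_of hC ih nice_uX (start_uX n) ?_
    rw [err_uX]; exact SmallN.zero

def dtP (f : Proc Cm) : Proc Cm := fun ch i => dt (f ch i)
def hP : Proc Cm := dxP uX + mP * (uX * uX)
def uT : Proc Cm := dtP uP

theorem NiceP.dtP {f : Proc Cm} (hf : NiceP f) : NiceP (dtP f) := fun ch i => (hf ch i).dt
theorem nice_uT : NiceP (uT (Cm := Cm)) := nice_uP.dtP

theorem bdd_hP (hC : 0 ≤ Cm) (n : ℕ) : BddN B n (hP (Cm := Cm)) := by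
  have h := (good_uX (B := B) hC (n + 1)).bdd
  exact BddN.add h.2 (BddN.mP.mul (BddN.mul h.mono1 h.mono1))

theorem err_uT : errP (uT (Cm := Cm)) = cP * (ttP * MP hP) := by
  funext ch i
  have h := (ch.ok i).dt_U
  have : errP (uT (Cm := Cm)) ch i = dt (Up (ch.a i) (ch.c i) (ch.m i) (ch.u i)) -
    Mo (ch.a i) (ch.c i) (ch.m i) (ch.u i) (dt (ch.u i)) := rfl
  rw [this, h, add_sub_cancel_left]; rfl

theorem good_uT (hC : 0 ≤ Cm) (hB : 0 ≤ B) (n : ℕ) : GoodN B n (uT (Cm := Cm)) := by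
  refine goodN_of hC (fun k _ => good_uX hC k) nice_uT (start_zero n _ fun ch => dt_lc) ?_
  rw [err_uT]
  exact SmallN.cmul ((BddN.ttP hB).mul (BddN.MP (good_uX hC n).bdd (bdd_hP hC n)))

theorem dtP_MP {f : Proc Cm} (hf : NiceP f) : dtP (MP f) = MP (dtP f) +
    cP * (ttP * MP (dxP (dxP f) + mP * (dxP f * uX + dxP f * uX))) +
    mP * (cov f uT + cP * (ttP * cov f hP)) := by
  funext ch i; exact (ch.ok i).dt_M (hf ch i)

theorem nice_hP : NiceP (hP (Cm := Cm)) := nice_uX.dxP.add (nice_mP.mul (nice_uX.mul nice_uX))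

theorem dt_hP : dtP (hP (Cm := Cm)) = dxP (dxP uT) + mP * (uX * dxP uT + uX * dxP uT) := by
  funext ch i
  have nu := (ch.adm i).nice
  have h0 : dt (cst (ch.m i)) = 0 := dt_cst _
  have h : dtP (hP (Cm := Cm)) ch i =
    dt (dx (dx (ch.u i)) + cst (ch.m i) * (dx (ch.u i) * dx (ch.u i))) := rfl
  rw [h, dt_add nu.dx.dx ((Nice.cst _).mul (nu.dx.mul nu.dx)),
    dt_mul (Nice.cst _) (nu.dx.mul nu.dx), dt_mul nu.dx nu.dx, ← dx_dt_comm nu.dx, ← dx_dt_comm nu,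
    h0, zero_mul, zero_add]
  change _ = dx (dx (dt (ch.u i))) + cst (ch.m i) *
    (dx (ch.u i) * dx (dt (ch.u i)) + dx (ch.u i) * dx (dt (ch.u i)))
  ring

theorem err_uTT : errP (dtP (uT (Cm := Cm))) =
    cP * (ttP * MP (dxP (dxP uT) + mP * (dxP uT * uX + dxP uT * uX))) +
    mP * (cov uT uT + cP * (ttP * cov uT hP)) +
    cP * (MP hP + ttP * dtP (MP hP)) := by
  have h1 : dtP (errP (uT (Cm := Cm))) = cP * (MP hP + ttP * dtP (MP hP)) := by
    rw [err_uT]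
    funext ch i
    have n := (nice_hP (Cm := Cm)).MP ch i
    change dt (cst (ch.c i) * (tt * MP hP ch i)) =
      cst (ch.c i) * (MP hP ch i + tt * dt (MP hP ch i))
    rw [dt_mul (Nice.cst _) (Nice.tt.mul n), dt_mul Nice.tt n, dt_cst, dt_tt]
    have c0 : cst 0 = (0 : Fn) := rfl
    have c1 : cst 1 = (1 : Fn) := rfl
    rw [c0, c1]; ring
  have h2 : errP (dtP (uT (Cm := Cm))) = dtP (errP uT) + (dtP (MP uT) - MP (dtP uT)) := by
    funext ch i
    have : dtP (errP (uT (Cm := Cm))) ch i = dt (uT ch (i + 1)) - dt (MP uT ch i) :=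
      dt_sub (nice_uT ch (i + 1)) (nice_uT.MP ch i)
    rw [Pi.add_apply, Pi.add_apply, this]
    change dt (uT ch (i + 1)) - MP (dtP uT) ch i = dt (uT ch (i + 1)) - dt (MP uT ch i) +
      (dt (MP uT ch i) - MP (dtP uT) ch i)
    ring
  rw [h2, h1, dtP_MP nice_uT]
  ring

theorem bdd_uTT (hC : 0 ≤ Cm) (hB : 0 ≤ B) : Bdd B (dtP (uT (Cm := Cm))) := by
  have gT := good_uT (Cm := Cm) hC hB 2
  have bT := gT.bdd
  have bX : Bdd B (uX (Cm := Cm)) := (good_uX hC 0).bdd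
  have T0 := bT.1
  have T1 := bT.2.1
  have T2 := bT.2.2
  have bH := bdd_hP (B := B) hC 2
  have H0 := bH.1
  have H1 := bH.2.1
  have H2 := bH.2.2
  have tB := Bdd.ttP (Cm := Cm) hB
  have bc : ∀ {f g : Proc Cm}, Bdd B f → Bdd B g → Bdd B (cov f g) := fun hf hg =>
    (hf.mul hg).MP.sub (hf.MP.mul hg.MP)
  have hMt : Bdd B (dtP (MP (hP (Cm := Cm)))) := by
    rw [dtP_MP nice_hP, dt_hP]
    refine Bdd.add (Bdd.add (Bdd.MP ?_) ((Bdd.cP hC).mul (tB.mul (Bdd.MP ?_)))) (Bdd.mP.mul ?_)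
    · exact Bdd.add T2 (Bdd.mP.mul ((bX.mul T1).add (bX.mul T1)))
    · exact Bdd.add H2 (Bdd.mP.mul ((H1.mul bX).add (H1.mul bX)))
    · exact (bc H0 T0).add ((Bdd.cP hC).mul (tB.mul (bc H0 H0)))
  refine (lemA nice_uT.dtP (start_zero 0 _ fun ch => ?_) hC ?_).1
  · change dt (dt lc) = _
    rw [dt_lc, dt_cst]
  · rw [err_uTT]
    refine Small.add (Small.add (Small.cmul (tB.mul (Bdd.MP ?_))) (Small.bmul Bdd.mP
      ((covS gT.1 gT.1).add (Small.cmul (tB.mul (bc T0 H0))))))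
      (Small.cmul (H0.MP.add (tB.mul hMt)))
    exact Bdd.add T2 (Bdd.mP.mul ((T1.mul bX).add (T1.mul bX)))

end PS

namespace PS

section fin
variable {k : ℕ} (op : OrderParam k)

theorem op_m_le (l : ℕ) (hl : l ≤ k) : op.m l ≤ 1 := by
  have h : ∀ j, j ≤ k → op.m (k - j) ≤ 1 := by
    intro j
    induction j with
    | zero => intro _; simp [op.m_last]
    | succ j ih =>
      intro hj
      have h1 := op.m_mono (k - (j + 1)) (by omega)
      have h2 : k - (j + 1) + 1 = k - j := by omega
      rw [h2] at h1
      exact h1.trans (ih (by omega))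
  have := h (k - l) (by omega)
  rwa [Nat.sub_sub_self hl] at this

theorem op_m_nonneg (l : ℕ) (hl : l ≤ k) : 0 ≤ op.m l := by
  rcases Nat.eq_zero_or_pos l with h | h
  · rw [h, op.m_zero]
  · exact (op.m_pos l h hl).le

theorem op_q_nonneg (l : ℕ) (hl : l ≤ k + 1) : 0 ≤ op.q l := by
  induction l with
  | zero => rw [op.q_zero]
  | succ l ih => exact (ih (by omega)).trans (op.q_mono l (by omega))

def wf (r l : ℕ) : ℝ :=
  if l = 0 then op.q 1 ^ (r - 1) else op.q (l + 1) ^ (r - 1) - op.q l ^ (r - 1)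

theorem wf_nonneg (r l : ℕ) (hl : l ≤ k) : 0 ≤ wf op r l := by
  unfold wf
  split_ifs with h
  · exact pow_nonneg (op_q_nonneg op 1 (by omega)) _
  · exact sub_nonneg.2 (pow_le_pow_left₀ (op_q_nonneg op l (by omega)) (op.q_mono l hl) _)

theorem wf_sum (r n : ℕ) : ∑ l ∈ Finset.range (n + 1), wf op r l = op.q (n + 1) ^ (r - 1) := by
  induction n with
  | zero => simp [wf]
  | succ n ih => rw [Finset.sum_range_succ, ih]; simp [wf]

def vA (S : Finset ℕ) (β : ℕ → ℝ) (p l : ℕ) : ℝ := ∑ r ∈ S.erase p, β r ^ 2 * r * wf op r l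

theorem opVar_eq (S : Finset ℕ) (β : ℕ → ℝ) (p : ℕ) (hp : p ∈ S) (s : ℝ) (l : ℕ) :
    opVar S (Function.update β p s) op l = vA op S β p l + (p * wf op p l) * s ^ 2 := by
  have h : opVar S (Function.update β p s) op l =
      ∑ r ∈ S, Function.update β p s r ^ 2 * r * wf op r l := by
    unfold opVar wf xiFn'
    split_ifs
    · rfl
    · rw [← Finset.sum_sub_distrib]
      exact Finset.sum_congr rfl fun r _ => by ring
  rw [h, ← Finset.sum_erase_add _ _ hp, Function.update_self, vA]
  congr 1
  · refine Finset.sum_congr rfl fun r hr => ?_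
    rw [Function.update_of_ne (Finset.ne_of_mem_erase hr)]
  · ring

theorem sum_rev_le (f : ℕ → ℝ) (hf : ∀ l, l ≤ k → 0 ≤ f l) (n : ℕ) :
    ∑ i ∈ Finset.range n, (if i ≤ k then f (k - i) else 0) ≤ ∑ l ∈ Finset.range (k + 1), f l := by
  rw [← Finset.sum_filter, ← Finset.sum_range_reflect f (k + 1)]
  have e : ∀ j, k + 1 - 1 - j = k - j := fun j => by omega
  simp only [e]
  refine Finset.sum_le_sum_of_subset_of_nonneg (fun i hi => ?_) fun i _ _ => hf _ (by omega)
  simp only [Finset.mem_filter, Finset.mem_range] at hi ⊢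
  omega

def theChain (S : Finset ℕ) (β : ℕ → ℝ) (p : ℕ) : Chain (p : ℝ) where
  m i := op.m (k - i)
  a i := if i ≤ k then vA op S β p (k - i) else 0
  c i := if i ≤ k then p * wf op p (k - i) else 0
  m0 i := op_m_nonneg op _ (by omega)
  m1 i := op_m_le op _ (by omega)
  a0 i := by
    split_ifs
    · exact Finset.sum_nonneg fun r _ => by
        have := wf_nonneg op r (k - i) (by omega)
        positivity
    · exact le_rfl
  c0 i := by
    split_ifs
    · have := wf_nonneg op p (k - i) (by omega)
      positivity
    · exact le_rfl
  cs n := by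
    refine (sum_rev_le (k := k) (fun l => p * wf op p l) (fun l hl => ?_) n).trans ?_
    · have := wf_nonneg op p l hl
      positivity
    · rw [← Finset.mul_sum, wf_sum, op.q_last, one_pow, mul_one]

theorem theChain_u (S : Finset ℕ) (β : ℕ → ℝ) (p : ℕ) (hp : p ∈ S) (t : ℝ) (j : ℕ) (hj : j ≤ k)
    (x : ℝ) : (theChain op S β p).u j t x =
      parisiB op.m (opVar S (Function.update β p t) op) k j x := by
  induction j generalizing x with
  | zero => rfl
  | succ j ih =>
    have hm : op.m (k - j) ≠ 0 := (op.m_pos _ (by omega) (by omega)).ne'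
    have hjk : j ≤ k := by omega
    have e1 : (theChain op S β p).u (j + 1) = Up (if j ≤ k then vA op S β p (k - j) else 0)
      (if j ≤ k then p * wf op p (k - j) else 0) (op.m (k - j)) ((theChain op S β p).u j) := rfl
    rw [e1, if_pos hjk, if_pos hjk, Up, if_neg hm, parisiB]
    change (1 / op.m (k - j)) * Real.log (∫ y, Real.exp (op.m (k - j) *
      (theChain op S β p).u j t (x + y)) ∂gauss (vA op S β p (k - j) +
        p * wf op p (k - j) * t ^ 2)) = _
    rw [opVar_eq op S β p hp]
    simp only [ih hjk]

theorem theChain_last (S : Finset ℕ) (β : ℕ → ℝ) (p : ℕ) (hp : p ∈ S) (t h : ℝ) :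
    (theChain op S β p).u (k + 1) t h =
      ∫ y, parisiB op.m (opVar S (Function.update β p t) op) k k (h + y)
        ∂(gauss (opVar S (Function.update β p t) op 0)) := by
  have e1 : (theChain op S β p).u (k + 1) = Up (if k ≤ k then vA op S β p (k - k) else 0)
    (if k ≤ k then p * wf op p (k - k) else 0) (op.m (k - k)) ((theChain op S β p).u k) := rfl
  have hm : op.m 0 = 0 := op.m_zero
  rw [e1, if_pos le_rfl, if_pos le_rfl, Nat.sub_self, Up, if_pos hm, opVar_eq op S β p hp t 0]
  simp only [← theChain_u op S β p hp t k le_rfl]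
  rfl

theorem theta_eq (S : Finset ℕ) (β : ℕ → ℝ) (p : ℕ) (hp : p ∈ S) (hp0 : 0 < p) (s x : ℝ) :
    thetaFn S (Function.update β p s) x =
      thetaFn (S.erase p) β x + s ^ 2 * (((p : ℝ) - 1) * x ^ p) := by
  unfold thetaFn xiFn xiFn'
  rw [← Finset.sum_erase_add _ _ hp, ← Finset.sum_erase_add (a := p) _ _ hp, Function.update_self]
  have h1 : ∑ r ∈ S.erase p, Function.update β p s r ^ 2 * r * x ^ (r - 1) =
      ∑ r ∈ S.erase p, β r ^ 2 * r * x ^ (r - 1) := Finset.sum_congr rfl fun r hr => by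
    rw [Function.update_of_ne (Finset.ne_of_mem_erase hr)]
  have h2 : ∑ r ∈ S.erase p, Function.update β p s r ^ 2 * x ^ r =
      ∑ r ∈ S.erase p, β r ^ 2 * x ^ r := Finset.sum_congr rfl fun r hr => by
    rw [Function.update_of_ne (Finset.ne_of_mem_erase hr)]
  have h3 : x ^ p = x ^ (p - 1) * x := by rw [← pow_succ]; congr 1; omega
  rw [h1, h2, h3]
  ring

def Dd (p : ℕ) : ℝ :=
  ∑ l ∈ Finset.Icc 1 k, op.m l * (((p : ℝ) - 1) * op.q (l + 1) ^ p - ((p : ℝ) - 1) * op.q l ^ p)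

theorem Dd_bd (p : ℕ) (hp0 : 0 < p) : |Dd op p| ≤ p := by
  have hp1 : (0 : ℝ) ≤ (p : ℝ) - 1 := by
    have : (1 : ℝ) ≤ p := by exact_mod_cast hp0
    linarith
  have hterm : ∀ l ∈ Finset.Icc 1 k,
      0 ≤ ((p : ℝ) - 1) * op.q (l + 1) ^ p - ((p : ℝ) - 1) * op.q l ^ p := fun l hl => by
    rw [Finset.mem_Icc] at hl
    rw [← mul_sub]
    exact mul_nonneg hp1
      (sub_nonneg.2 (pow_le_pow_left₀ (op_q_nonneg op l (by omega)) (op.q_mono l hl.2) _))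
  have h0 : 0 ≤ Dd op p := Finset.sum_nonneg fun l hl =>
    mul_nonneg (op_m_nonneg op l (Finset.mem_Icc.1 hl).2) (hterm l hl)
  have h1 : Dd op p ≤ ∑ l ∈ Finset.Icc 1 k,
      (((p : ℝ) - 1) * op.q (l + 1) ^ p - ((p : ℝ) - 1) * op.q l ^ p) :=
    Finset.sum_le_sum fun l hl =>
      mul_le_of_le_one_left (hterm l hl) (op_m_le op l (Finset.mem_Icc.1 hl).2)
  have h2 : ∀ n, ∑ l ∈ Finset.Icc 1 n,
      (((p : ℝ) - 1) * op.q (l + 1) ^ p - ((p : ℝ) - 1) * op.q l ^ p) =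
      ((p : ℝ) - 1) * op.q (n + 1) ^ p - ((p : ℝ) - 1) * op.q 1 ^ p := fun n => by
    induction n with
    | zero => simp
    | succ n ih => rw [Finset.sum_Icc_succ_top (by omega), ih]; ring
  rw [h2, op.q_last, one_pow] at h1
  have h3 : 0 ≤ ((p : ℝ) - 1) * op.q 1 ^ p :=
    mul_nonneg hp1 (pow_nonneg (op_q_nonneg op 1 (by omega)) _)
  rw [abs_of_nonneg h0]
  linarith

theorem parisiP_eq (S : Finset ℕ) (β : ℕ → ℝ) (p : ℕ) (hp : p ∈ S) (hp0 : 0 < p) (h s : ℝ) :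
    parisiP S h (Function.update β p s) op = (theChain op S β p).u (k + 1) s h -
      (1 / 2) * (∑ l ∈ Finset.Icc 1 k, op.m l * (thetaFn (S.erase p) β (op.q (l + 1)) -
        thetaFn (S.erase p) β (op.q l)) + s ^ 2 * Dd op p) := by
  unfold parisiP
  rw [theChain_last op S β p hp, Dd, Finset.mul_sum (Finset.Icc 1 k) _ (s ^ 2), ← Finset.sum_add_distrib]
  congr 2
  refine Finset.sum_congr rfl fun l _ => ?_
  rw [theta_eq S β p hp hp0, theta_eq S β p hp hp0]
  ring

end fin
end PS

/-- For every `B > 0` and `p ∈ S` there is an `L` such that for every `k ≥ 1`, every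
discrete order parameter with at most `k` atoms, and every `β` with all coordinates
bounded by `B` in absolute value, the map `β_p ↦ P(m,q;β)` is twice differentiable with
second derivative bounded in absolute value by `L` on `[-B,B]`. -/
theorem parisiP_second_deriv_bounded
    (S : Finset ℕ) (hS : ∀ p ∈ S, 0 < p) (h : ℝ)
    (B : ℝ) (hB : 0 < B) (p : ℕ) (hp : p ∈ S) :
    ∃ L : ℝ, ∀ k : ℕ, 1 ≤ k → ∀ op : OrderParam k, ∀ β : ℕ → ℝ,
      (∀ r ∈ S, |β r| ≤ B) →
      ∃ g' g'' : ℝ → ℝ,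
        (∀ t : ℝ, HasDerivAt (fun s : ℝ => parisiP S h (Function.update β p s) op) (g' t) t) ∧
        (∀ t : ℝ, HasDerivAt g' (g'' t) t) ∧
        (∀ t : ℝ, |t| ≤ B → |g'' t| ≤ L) := by
  obtain ⟨-, K, K0, hK⟩ := PS.bdd_uTT (Cm := (p : ℝ)) (Nat.cast_nonneg p) hB.le
  refine ⟨K + p, fun k _ op β _ => ?_⟩
  have nu := ((PS.theChain op S β p).adm (k + 1)).nice
  refine ⟨fun t => PS.dt ((PS.theChain op S β p).u (k + 1)) t h - t * PS.Dd op p,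
    fun t => PS.dt (PS.dt ((PS.theChain op S β p).u (k + 1))) t h - PS.Dd op p,
    fun t => ?_, fun t => ?_, fun t ht => ?_⟩
  · simp only [PS.parisiP_eq op S β p hp (hS p hp)]
    have h2 := (((hasDerivAt_pow 2 t).mul_const (PS.Dd op p)).const_add
      (∑ l ∈ Finset.Icc 1 k, op.m l * (thetaFn (S.erase p) β (op.q (l + 1)) -
        thetaFn (S.erase p) β (op.q l)))).const_mul (1 / 2 : ℝ)
    refine ((nu.hdt t h).fun_sub h2).congr_deriv ?_
    push_cast
    ring
  · refine ((nu.dt.hdt t h).fun_sub ((hasDerivAt_id t).mul_const (PS.Dd op p))).congr_deriv ?_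
    ring
  · have h1 := hK (PS.theChain op S β p) (k + 1) t h ht
    have h2 := PS.Dd_bd op p (hS p hp)
    exact (abs_sub _ _).trans (add_le_add h1 h2)
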